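/- Let a_1 < b_1 < a_2 < b_2 < … < a_L < b_L be real numbers, S := ⋃_{l=1}^L [a_l,b_l], R(z) := ∏_{l=1}^L (z−a_l)(z−b_l), and let √R denote the branch analytic on ℂ∖S with √R(z)/z^L → 1 as z → ∞. Then for every real polynomial T of degree at most L−1: (i) for every z ∈ ℂ∖S, (1/π) ∑_{m=1}^L (−1)^{L+m+1} ∫_{a_m}^{b_m} T(t)/((t−z) √|R(t)|) dt = T(z)/√R(z); and (ii) for every x in the interior of S, the Cauchy principal value of ∑_{m=1}^L (−1)^{L+m+1} ∫_{a_m}^{b_m} T(t)/((t−x) √|R(t)|) dt equals 0. -/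

import Mathlib

open MeasureTheory Filter Set Real

/-!
The function `f = T / √R` is holomorphic in the upper half-plane, tends to zero at infinity, and is
dominated by a multiple of the sum of `((1 + |z|) |z - e|) ^ (-1/2)` over the branch points `e`,
because only the factor of the nearest branch point can be small. Cauchy's theorem on horizontal
lines, applied to the difference quotient of `f` at `z` and pushed down to the real line, therefore
represents `f z` by the boundary values of `f`. The same integral with `conj f` vanishes by
reflection, so that `∫ Im f(t) / (t - z) dt = π f(z)`. As `Im f` vanishes off `S` and equals
`± T / √|R|` on it, this is (i) in the upper half-plane, and it extends to `ℂ \ S` by the identity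
theorem.

For (ii), the truncated kernel `1 / s` on `|s| ≥ ε` and the kernel `s / (s² + ε²)` are both odd
approximations of `1 / s`, hence give the same principal value at a point where `Im f` is
differentiable. The second one computes `π Re f(x + iε)`, and `f` is purely imaginary inside `S`.
-/

section

open Asymptotics Bornology Topology ComplexConjugate
open Complex (I)
open UpperHalfPlane (upperHalfPlaneSet isOpen_upperHalfPlaneSet)

/-! ### Cauchy's formula in the upper half-plane -/

theorem norm_intervalIntegral_horizontal_le {g : ℂ → ℂ} {ε N C : ℝ} (hε : 0 < ε) (hεN : ε < N)
    (hg : DifferentiableOn ℂ g upperHalfPlaneSet)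
    (hC : ∀ w ∈ upperHalfPlaneSet, N ≤ ‖w‖ → ‖g w‖ ≤ C) :
    ‖∫ x in (-N)..N, g (x + ε * I)‖ ≤ 4 * N * C := by
  have hrect := Complex.integral_boundary_rect_eq_zero_of_differentiableOn g ⟨-N, ε⟩ ⟨N, N⟩
    (hg.mono fun w hw => hε.trans_le (by
      have him : w.im ∈ uIcc ε N := (Complex.mem_reProdIm.1 hw).2
      rw [uIcc_of_le hεN.le] at him
      exact him.1))
  have htop : ‖∫ x : ℝ in (-N)..N, g (x + N * I)‖ ≤ C * |N - (-N)| :=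
    intervalIntegral.norm_integral_le_of_norm_le_const fun x _ =>
      hC _ (by simpa using hε.trans hεN) ((le_abs_self N).trans
        (by simpa using Complex.abs_im_le_norm (x + N * I)))
  have hside (r : ℝ) (hr : |r| = N) :
      ‖∫ y : ℝ in ε..N, g (r + y * I)‖ ≤ C * |N - ε| :=
    intervalIntegral.norm_integral_le_of_norm_le_const fun y hy => by
      rw [uIoc_of_le hεN.le] at hy
      exact hC _ (by simpa using hε.trans hy.1)
        (hr.ge.trans (by simpa using Complex.abs_re_le_norm (r + y * I)))
  have hN : |N| = N := abs_of_pos (hε.trans hεN)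
  have hright := hside N hN
  have hleft := hside (-N) (by rwa [abs_neg])
  have hbottom : ∫ x : ℝ in (-N)..N, g (x + ε * I) = (∫ x : ℝ in (-N)..N, g (x + N * I))
      - I * (∫ y : ℝ in ε..N, g (N + y * I)) + I * ∫ y : ℝ in ε..N, g ((-N : ℝ) + y * I) := by
    simp only [smul_eq_mul] at hrect
    linear_combination hrect
  rw [abs_of_pos (by linarith)] at htop hright hleft
  have hC0 : 0 ≤ C :=
    (norm_nonneg _).trans (hC (N * I) (by simpa using hε.trans hεN) (by simp [hN]))
  rw [hbottom]
  refine (norm_add_le _ _).trans ((add_le_add_left (norm_sub_le _ _) _).trans ?_)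
  simp only [norm_mul, Complex.norm_I, one_mul]
  nlinarith

theorem integral_horizontal_eq_zero {g : ℂ → ℂ} {ε : ℝ} (hε : 0 < ε)
    (hg : DifferentiableOn ℂ g upperHalfPlaneSet)
    (hinf : g =o[cobounded ℂ ⊓ 𝓟 upperHalfPlaneSet] fun w => w⁻¹)
    (hint : Integrable fun t : ℝ => g (t + ε * I)) :
    ∫ t : ℝ, g (t + ε * I) = 0 := by
  refine tendsto_nhds_unique
    (intervalIntegral_tendsto_integral hint tendsto_neg_atTop_atBot tendsto_id)
    ((isLittleO_one_iff ℝ).1 (IsLittleO.of_bound fun c hc => ?_))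
  obtain ⟨r, -, hr⟩ := (hasBasis_cobounded_norm.inf_principal _).eventually_iff.1
    (hinf.bound (by positivity : 0 < c / 4))
  filter_upwards [eventually_gt_atTop ε, eventually_ge_atTop r] with N hεN hrN
  have hN : 0 < N := hε.trans hεN
  have hC : ∀ w ∈ upperHalfPlaneSet, N ≤ ‖w‖ → ‖g w‖ ≤ c / 4 * N⁻¹ := fun w hw hwN =>
    (hr ⟨hrN.trans hwN, hw⟩).trans (by rw [norm_inv]; gcongr)
  calc ‖∫ x in (-N)..N, g (x + ε * I)‖ ≤ 4 * N * (c / 4 * N⁻¹) :=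
        norm_intervalIntegral_horizontal_le hε hεN hg hC
    _ = c * ‖(1 : ℝ)‖ := by rw [norm_one]; field_simp

theorem continuous_horizontal {g : ℂ → ℂ} (hg : ContinuousOn g upperHalfPlaneSet) {y : ℝ}
    (hy : 0 < y) : Continuous fun t : ℝ => g (t + y * I) :=
  hg.comp_continuous (by fun_prop) fun t => by simpa using hy

theorem integral_boundary_eq_zero {g : ℂ → ℂ} {G : ℝ → ℝ}
    (hg : DifferentiableOn ℂ g upperHalfPlaneSet)
    (hinf : g =o[cobounded ℂ ⊓ 𝓟 upperHalfPlaneSet] fun w => w⁻¹) (hG : Integrable G)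
    (hdom : ∀ᶠ y : ℝ in 𝓝[>] 0, ∀ᵐ t : ℝ, ‖g (t + y * I)‖ ≤ G t)
    (hlim : ∀ᵐ t : ℝ, Tendsto (fun y : ℝ => g (t + y * I)) (𝓝[>] 0) (𝓝 (g t))) :
    ∫ t : ℝ, g t = 0 := by
  have hmeas : ∀ᶠ y : ℝ in 𝓝[>] 0, AEStronglyMeasurable fun t : ℝ => g (t + y * I) := by
    filter_upwards [self_mem_nhdsWithin] with y hy
    exact (continuous_horizontal hg.continuousOn hy).aestronglyMeasurable
  refine tendsto_nhds_unique
    (tendsto_integral_filter_of_dominated_convergence G hmeas hdom hG hlim)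
    (tendsto_const_nhds.congr' ?_)
  filter_upwards [self_mem_nhdsWithin, hmeas, hdom] with y hy hmeas_y hdom_y
  exact (integral_horizontal_eq_zero hy hg hinf (hG.mono' hmeas_y hdom_y)).symm

/-- Decay and boundary behaviour under which a function on the upper half-plane is represented by
its values on the real line. The boundary values are those of `f` itself at real points, and the
majorant covers the closed half-plane (`𝓝[≥] 0`), so that it bounds them too. -/
structure HasHalfPlaneBoundary (f : ℂ → ℂ) : Prop where
  differentiableOn : DifferentiableOn ℂ f upperHalfPlaneSet
  tendsto_zero : Tendsto f (cobounded ℂ ⊓ 𝓟 upperHalfPlaneSet) (𝓝 0)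
  dominated : ∃ G : ℝ → ℝ, Integrable G ∧
    ∀ᶠ y : ℝ in 𝓝[≥] 0, ∀ᵐ t : ℝ, ‖f (t + y * I)‖ ≤ G t * (1 + |t|)
  boundary : ∀ᵐ t : ℝ, Tendsto (fun y : ℝ => f (t + y * I)) (𝓝[>] 0) (𝓝 (f t))

theorem tendsto_vertical (t : ℝ) : Tendsto (fun y : ℝ => (t + y * I : ℂ)) (𝓝[>] 0) (𝓝 t) := by
  have h : Continuous fun y : ℝ => (t + y * I : ℂ) := by fun_prop
  simpa using (h.tendsto 0).mono_left nhdsWithin_le_nhds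

theorem exists_one_add_abs_re_le_mul_norm_sub (u : ℂ) {η : ℝ} (hη : 0 < η) :
    ∃ K : ℝ, ∀ w : ℂ, η ≤ |w.im - u.im| → 1 + |w.re| ≤ K * ‖w - u‖ := by
  refine ⟨(1 + |u.re|) / η + 1, fun w hw => ?_⟩
  have hre : |w.re| ≤ |u.re| + ‖w - u‖ := by
    have := Complex.abs_re_le_norm (w - u)
    rw [Complex.sub_re] at this
    linarith [abs_sub_abs_le_abs_sub w.re u.re]
  have him : η ≤ ‖w - u‖ := hw.trans (Complex.abs_im_le_norm (w - u))
  calc 1 + |w.re| ≤ (1 + |u.re|) / η * η + ‖w - u‖ := by field_simp; linarith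
    _ ≤ (1 + |u.re|) / η * ‖w - u‖ + ‖w - u‖ := by gcongr
    _ = ((1 + |u.re|) / η + 1) * ‖w - u‖ := by ring

theorem isBigO_inv_sub_cobounded (u : ℂ) :
    (fun w => (w - u)⁻¹) =O[cobounded ℂ] fun w => w⁻¹ :=
  (isLittleO_const_id_cobounded u).right_isBigO_sub.inv_rev <| by
    filter_upwards [eventually_ne_cobounded 0] with w hw h using absurd h hw

theorem ofReal_sub_ne_zero {z : ℂ} (hz : z.im ≠ 0) (t : ℝ) : (t : ℂ) - z ≠ 0 :=
  fun h => hz (by simpa using congrArg Complex.im (sub_eq_zero.1 h).symm)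

theorem inv_sub_mul_sub_conj (z : ℂ) (t : ℝ) :
    ((t - z) * (t - conj z))⁻¹ = (((t - z.re) ^ 2 + z.im ^ 2)⁻¹ : ℝ) := by
  have h : (t - z) * (t - conj z) = ((t - z.re) ^ 2 + z.im ^ 2 : ℝ) := by
    rw [show (t : ℂ) - conj z = conj (t - z) by simp, Complex.mul_conj, Complex.normSq_apply]
    simp [pow_two]
  rw [h, Complex.ofReal_inv]

theorem inv_sub_mul_sub_conj_eq_cauchyPDFReal {z : ℂ} (hz : 0 < z.im) (t : ℝ) :
    ((t - z) * (t - conj z))⁻¹ =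
      (π / z.im * ProbabilityTheory.cauchyPDFReal z.re z.im.toNNReal t : ℝ) := by
  rw [inv_sub_mul_sub_conj, ProbabilityTheory.cauchyPDFReal_def]
  have := pi_ne_zero; have := hz.ne'
  rw [Real.coe_toNNReal _ hz.le]
  field_simp

theorem integrable_inv_sub_mul_sub_conj {z : ℂ} (hz : 0 < z.im) :
    Integrable fun t : ℝ => ((t - z) * (t - conj z) : ℂ)⁻¹ := by
  simp only [inv_sub_mul_sub_conj_eq_cauchyPDFReal hz]
  exact ((ProbabilityTheory.integrable_cauchyPDFReal ..).const_mul _).ofReal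

theorem integral_inv_sub_mul_sub_conj {z : ℂ} (hz : 0 < z.im) :
    ∫ t : ℝ, ((t - z) * (t - conj z) : ℂ)⁻¹ = π / z.im := by
  simp only [inv_sub_mul_sub_conj_eq_cauchyPDFReal hz]
  rw [integral_complex_ofReal, integral_const_mul,
    ProbabilityTheory.integral_cauchyPDFReal_eq_one _ (Real.toNNReal_pos.2 hz).ne', mul_one,
    Complex.ofReal_div]

theorem dslope_eq_inv_sub_mul_sub {𝕜 : Type*} [NontriviallyNormedField 𝕜] {f : 𝕜 → 𝕜} {z w : 𝕜}
    (hw : w ≠ z) : dslope f z w = (w - z)⁻¹ * (f w - f z) := by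
  rw [dslope_of_ne _ hw, slope_def_module, smul_eq_mul]

theorem dslope_div_sub {𝕜 : Type*} [NontriviallyNormedField 𝕜] {f : 𝕜 → 𝕜} {z u w : 𝕜}
    (hwz : w ≠ z) (hwu : w ≠ u) (hzu : z ≠ u) :
    dslope f z w / (w - u) =
      (f w / (w - z) - f w / (w - u)) / (z - u) - f z * ((w - z) * (w - u))⁻¹ := by
  have hwz := sub_ne_zero.2 hwz
  have hwu := sub_ne_zero.2 hwu
  have hzu := sub_ne_zero.2 hzu
  rw [dslope_eq_inv_sub_mul_sub (sub_ne_zero.1 hwz)]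
  field_simp
  ring

namespace HasHalfPlaneBoundary

variable {f : ℂ → ℂ} {z : ℂ}

theorem aestronglyMeasurable (hf : HasHalfPlaneBoundary f) :
    AEStronglyMeasurable fun t : ℝ => f t := by
  have hy : Tendsto (fun n : ℕ => 1 / ((n : ℝ) + 1)) atTop (𝓝[>] 0) :=
    tendsto_nhdsWithin_iff.2 ⟨tendsto_one_div_add_atTop_nhds_zero_nat,
      Eventually.of_forall fun n => mem_Ioi.2 Nat.one_div_pos_of_nat⟩
  refine aestronglyMeasurable_of_tendsto_ae atTop (fun n : ℕ =>
    (continuous_horizontal hf.differentiableOn.continuousOn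
      (Nat.one_div_pos_of_nat (n := n))).aestronglyMeasurable) ?_
  filter_upwards [hf.boundary] with t ht using ht.comp hy

theorem integrable_div_sub (hf : HasHalfPlaneBoundary f) (hz : z.im ≠ 0) :
    Integrable fun t : ℝ => f t / (t - z) := by
  obtain ⟨G, hG, hdom⟩ := hf.dominated
  obtain ⟨K, hK⟩ := exists_one_add_abs_re_le_mul_norm_sub z (abs_pos.2 hz)
  refine (hG.const_mul K).mono' (hf.aestronglyMeasurable.mul
    (Continuous.aestronglyMeasurable ?_)) ?_
  · exact ((by fun_prop : Continuous fun t : ℝ => (t : ℂ) - z)).inv₀ (ofReal_sub_ne_zero hz)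
  · filter_upwards [hdom.self_of_nhdsWithin self_mem_Ici] with t ht
    have hpos : 0 < ‖(t : ℂ) - z‖ := norm_pos_iff.2 (ofReal_sub_ne_zero hz t)
    have hKt := hK t (by simp)
    have hGt : 0 ≤ G t := nonneg_of_mul_nonneg_left ((norm_nonneg _).trans ht) (by positivity)
    simp only [Complex.ofReal_zero, zero_mul, add_zero, Complex.ofReal_re] at ht hKt
    rw [norm_div, div_le_iff₀ hpos]
    nlinarith [mul_le_mul_of_nonneg_left hKt hGt]

theorem integral_div_sub_eq_zero (hf : HasHalfPlaneBoundary f) (hz : z.im < 0) :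
    ∫ t : ℝ, f t / (t - z) = 0 := by
  obtain ⟨G, hG, hdom⟩ := hf.dominated
  obtain ⟨K, hK⟩ := exists_one_add_abs_re_le_mul_norm_sub z (neg_pos.2 hz)
  have hne (w : ℂ) (hw : 0 ≤ w.im) : w - z ≠ 0 := fun h => by
    rw [sub_eq_zero.1 h] at hw
    exact hw.not_gt hz
  refine integral_boundary_eq_zero (g := fun w => f w / (w - z)) (G := fun t => K * G t)
    (hf.differentiableOn.div (by fun_prop) fun w hw => hne w (le_of_lt hw)) ?_
    (hG.const_mul K) ?_ ?_
  · have := ((isLittleO_one_iff ℂ).2 hf.tendsto_zero).mul_isBigO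
      ((isBigO_inv_sub_cobounded z).mono inf_le_left)
    simpa only [one_mul, div_eq_mul_inv] using this
  · filter_upwards [hdom.filter_mono (nhdsWithin_mono _ Ioi_subset_Ici_self),
      self_mem_nhdsWithin] with y hy hy0
    have hy0 : 0 < y := hy0
    filter_upwards [hy] with t ht
    have hpos : 0 < ‖t + y * I - z‖ := norm_pos_iff.2 (hne _ (by simpa using hy0.le))
    have hKt := hK (t + y * I) (by
      simpa using (by linarith : -z.im ≤ y - z.im).trans (le_abs_self _))
    have hGt : 0 ≤ G t := nonneg_of_mul_nonneg_left ((norm_nonneg _).trans ht) (by positivity)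
    rw [show (t + y * I : ℂ).re = t by simp] at hKt
    rw [norm_div, div_le_iff₀ hpos]
    nlinarith [mul_le_mul_of_nonneg_left hKt hGt]
  · filter_upwards [hf.boundary] with t ht
    exact ht.div ((tendsto_vertical t).sub_const z) (hne t (by simp))

theorem exists_integrable_norm_dslope_le (hf : HasHalfPlaneBoundary f) (hz : 0 < z.im) :
    ∃ G : ℝ → ℝ, Integrable G ∧
      ∀ᶠ y : ℝ in 𝓝[≥] 0, ∀ᵐ t : ℝ, ‖dslope f z (t + y * I)‖ ≤ G t * (1 + |t|) := by
  obtain ⟨G, hG, hdom⟩ := hf.dominated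
  obtain ⟨K, hK⟩ := exists_one_add_abs_re_le_mul_norm_sub z (half_pos hz)
  have hdecay : Integrable fun t : ℝ => (1 + |t|) ^ (-2 : ℝ) := by
    simpa using integrable_one_add_norm (E := ℝ) (μ := volume) (r := 2) (by simp)
  refine ⟨fun t => K * (G t + ‖f z‖ * (1 + |t|) ^ (-2 : ℝ)),
    (hG.add (hdecay.const_mul _)).const_mul K, ?_⟩
  filter_upwards [hdom, nhdsWithin_le_nhds (Iio_mem_nhds (half_pos hz))] with y hy hyz
  filter_upwards [hy] with t ht
  have hyz : y < z.im / 2 := hyz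
  have him : (t + y * I : ℂ).im = y := by simp
  have hne : (t + y * I : ℂ) ≠ z := fun h => by rw [h] at him; linarith
  have hpos : 0 < ‖t + y * I - z‖ := norm_pos_iff.2 (sub_ne_zero.2 hne)
  have hKt := hK (t + y * I) (by rw [him, abs_sub_comm]; exact le_abs.2 (Or.inl (by linarith)))
  rw [show (t + y * I : ℂ).re = t by simp] at hKt
  have hr : 1 ≤ 1 + |t| := le_add_of_nonneg_right (abs_nonneg t)
  have hGt : 0 ≤ G t := nonneg_of_mul_nonneg_left ((norm_nonneg _).trans ht) (by positivity)
  rw [dslope_eq_inv_sub_mul_sub hne, norm_mul, norm_inv, inv_mul_le_iff₀ hpos]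
  calc ‖f (t + y * I) - f z‖ ≤ G t * (1 + |t|) + ‖f z‖ := (norm_sub_le _ _).trans (by gcongr)
    _ ≤ G t * (1 + |t|) * (1 + |t|) + ‖f z‖ := by
      gcongr
      exact le_mul_of_one_le_right (by positivity) hr
    _ = (1 + |t|) * ((G t + ‖f z‖ * (1 + |t|) ^ (-2 : ℝ)) * (1 + |t|)) := by
      rw [rpow_neg (by positivity), rpow_two]
      field_simp
    _ ≤ (K * ‖t + y * I - z‖) * ((G t + ‖f z‖ * (1 + |t|) ^ (-2 : ℝ)) * (1 + |t|)) := by gcongr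
    _ = ‖t + y * I - z‖ * (K * (G t + ‖f z‖ * (1 + |t|) ^ (-2 : ℝ)) * (1 + |t|)) := by ring

protected theorem dslope (hf : HasHalfPlaneBoundary f) (hz : 0 < z.im) :
    HasHalfPlaneBoundary (dslope f z) := by
  refine ⟨(Complex.differentiableOn_dslope (isOpen_upperHalfPlaneSet.mem_nhds hz)).2
    hf.differentiableOn, ?_, hf.exists_integrable_norm_dslope_le hz, ?_⟩
  · have hinv : Tendsto (fun w => (w - z)⁻¹) (cobounded ℂ) (𝓝 0) :=
      (isBigO_inv_sub_cobounded z).trans_tendsto tendsto_inv₀_cobounded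
    have h := (hinv.mono_left inf_le_left).mul (hf.tendsto_zero.sub_const (f z))
    rw [zero_mul] at h
    refine h.congr' ?_
    filter_upwards [(eventually_ne_cobounded z).filter_mono inf_le_left] with w hw
      using (dslope_eq_inv_sub_mul_sub hw).symm
  · filter_upwards [hf.boundary] with t ht
    have hne (y : ℝ) (hy : y < z.im) : (t + y * I : ℂ) ≠ z := fun h =>
      hy.ne (by simpa using congrArg Complex.im h)
    have hz0 : (t : ℂ) - z ≠ 0 := ofReal_sub_ne_zero hz.ne' t
    rw [dslope_eq_inv_sub_mul_sub (sub_ne_zero.1 hz0)]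
    refine ((((tendsto_vertical t).sub_const z).inv₀ hz0).mul (ht.sub_const (f z))).congr' ?_
    filter_upwards [Ioo_mem_nhdsGT hz] with y hy using (dslope_eq_inv_sub_mul_sub (hne y hy.2)).symm

theorem integral_div_sub_eq (hf : HasHalfPlaneBoundary f) (hz : 0 < z.im) :
    ∫ t : ℝ, f t / (t - z) = 2 * π * I * f z := by
  have hconj : (conj z).im < 0 := by simpa using hz
  have hzconj : z - conj z = 2 * z.im * I := by rw [Complex.sub_conj]; push_cast; ring
  have hz0 : (z.im : ℂ) ≠ 0 := by exact_mod_cast hz.ne'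
  have hpartial (t : ℝ) := dslope_div_sub (f := f) (sub_ne_zero.1 (ofReal_sub_ne_zero hz.ne' t))
    (sub_ne_zero.1 (ofReal_sub_ne_zero hconj.ne t))
    (sub_ne_zero.1 (by rw [hzconj]; simp [hz.ne'] : z - conj z ≠ 0))
  have hzero := (hf.dslope hz).integral_div_sub_eq_zero hconj
  have hint := hf.integrable_div_sub hz.ne'
  have hint' := hf.integrable_div_sub hconj.ne
  simp only [hpartial] at hzero
  have hdiff : Integrable fun t : ℝ =>
      (f t / (t - z) - f t / (t - conj z)) / (z - conj z) := (hint.sub hint').div_const _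
  rw [integral_sub hdiff ((integrable_inv_sub_mul_sub_conj hz).const_mul _), integral_div,
    integral_sub hint hint', hf.integral_div_sub_eq_zero hconj, integral_const_mul,
    integral_inv_sub_mul_sub_conj hz, sub_zero, hzconj] at hzero
  have hI := Complex.I_ne_zero
  field_simp at hzero
  linear_combination hzero

theorem integral_conj_div_sub_eq_zero (hf : HasHalfPlaneBoundary f) (hz : 0 < z.im) :
    ∫ t : ℝ, conj (f t) / (t - z) = 0 := by
  have hconj : (conj z).im < 0 := by simpa using hz
  rw [← map_zero (starRingEnd ℂ), ← hf.integral_div_sub_eq_zero hconj, ← integral_conj]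
  simp only [map_div₀, map_sub, Complex.conj_conj, Complex.conj_ofReal]

theorem integrable_conj_div_sub (hf : HasHalfPlaneBoundary f) (hz : z.im ≠ 0) :
    Integrable fun t : ℝ => conj (f t) / (t - z) := by
  have h := Complex.conjCLE.toContinuousLinearMap.integrable_comp
    (hf.integrable_div_sub (z := conj z) (by simpa using hz))
  simpa using h

theorem integrable_im_div_sub (hf : HasHalfPlaneBoundary f) (hz : z.im ≠ 0) :
    Integrable fun t : ℝ => ((f t).im : ℂ) / (t - z) := by
  simp only [Complex.im_eq_sub_conj, div_right_comm _ (2 * I), sub_div]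
  exact ((hf.integrable_div_sub hz).div_const _).sub ((hf.integrable_conj_div_sub hz).div_const _)

theorem integral_im_div_sub (hf : HasHalfPlaneBoundary f) (hz : 0 < z.im) :
    ∫ t : ℝ, ((f t).im : ℂ) / (t - z) = π * f z := by
  simp only [Complex.im_eq_sub_conj, div_right_comm _ (2 * I), sub_div _ _ (_ - z)]
  rw [integral_div, integral_sub (hf.integrable_div_sub hz.ne') (hf.integrable_conj_div_sub hz.ne'),
    hf.integral_div_sub_eq hz, hf.integral_conj_div_sub_eq_zero hz, sub_zero]
  have hI := Complex.I_ne_zero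
  field_simp

end HasHalfPlaneBoundary

/-! ### Polynomials divided by square roots of products -/

theorem exists_one_add_norm_le_mul_norm_sub {ι V : Type*} [NormedAddCommGroup V] {s : Finset ι}
    (hs : s.Nonempty) {p : ι → V} (hp : InjOn p s) :
    ∃ K, 0 < K ∧ ∀ w, ∃ j ∈ s, ∀ k ∈ s, k ≠ j → 1 + ‖w‖ ≤ K * ‖w - p k‖ := by
  set κ : ι × ι → ℝ := fun q => 2 * (1 + ‖p q.1‖) / ‖p q.1 - p q.2‖
  have hκ : ∀ q, 0 ≤ κ q := fun q => by positivity
  refine ⟨1 + ∑ q ∈ s ×ˢ s, κ q, by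
    have := Finset.sum_nonneg fun q (_ : q ∈ s ×ˢ s) => hκ q
    positivity, fun w => ?_⟩
  obtain ⟨j, hj, hmin⟩ := s.exists_min_image (fun k => ‖w - p k‖) hs
  refine ⟨j, hj, fun k hk hkj => ?_⟩
  have hpos : 0 < ‖p k - p j‖ := norm_sub_pos_iff.2 fun h => hkj (hp hk hj h)
  have hnear : ‖p k - p j‖ ≤ 2 * ‖w - p k‖ := by
    have := norm_sub_le_norm_sub_add_norm_sub (p k) w (p j)
    rw [norm_sub_rev (p k) w] at this
    linarith [hmin k hk]
  have hκ_le : κ (k, j) ≤ ∑ q ∈ s ×ˢ s, κ q :=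
    Finset.single_le_sum (fun q _ => hκ q) (Finset.mk_mem_product hk hj)
  calc 1 + ‖w‖ ≤ (1 + ‖p k‖) + ‖w - p k‖ := by linarith [norm_sub_norm_le w (p k)]
    _ = κ (k, j) * (‖p k - p j‖ / 2) + ‖w - p k‖ := by simp only [κ]; field_simp
    _ ≤ (∑ q ∈ s ×ˢ s, κ q) * ‖w - p k‖ + ‖w - p k‖ := by gcongr; linarith
    _ = (1 + ∑ q ∈ s ×ˢ s, κ q) * ‖w - p k‖ := by ring

theorem exists_norm_aeval_le {𝕜 A : Type*} [NormedField 𝕜] [SeminormedRing A] [NormOneClass A]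
    [NormedAlgebra 𝕜 A] (T : Polynomial 𝕜) :
    ∃ C, 0 ≤ C ∧ ∀ w : A, ‖Polynomial.aeval w T‖ ≤ C * (1 + ‖w‖) ^ T.natDegree := by
  refine ⟨∑ i ∈ Finset.range (T.natDegree + 1), ‖T.coeff i‖, by positivity, fun w => ?_⟩
  rw [Polynomial.aeval_eq_sum_range, Finset.sum_mul]
  refine norm_sum_le_of_le _ fun i hi => (norm_smul_le _ _).trans ?_
  have hle : i ≤ T.natDegree := Nat.lt_succ_iff.1 (Finset.mem_range.1 hi)
  gcongr
  calc ‖w ^ i‖ ≤ ‖w‖ ^ i := norm_pow_le _ _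
    _ ≤ (1 + ‖w‖) ^ i := by gcongr; linarith
    _ ≤ (1 + ‖w‖) ^ T.natDegree := pow_le_pow_right₀ (by linarith [norm_nonneg w]) hle

theorem norm_div_le_of_nearest {ι : Type*} {s : Finset ι} {p : ι → ℂ} {w q : ℂ}
    (hq : ‖q‖ = ∏ e ∈ s, √‖w - p e‖) {v : ℂ} {n : ℕ} {C K : ℝ} (hC : 0 ≤ C) (hK : 0 < K)
    (hv : ‖v‖ ≤ C * (1 + ‖w‖) ^ n) (hn : 2 * (n + 1) ≤ s.card) {j : ι} (hj : j ∈ s)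
    (hfar : ∀ k ∈ s, k ≠ j → 1 + ‖w‖ ≤ K * ‖w - p k‖) :
    ‖v / q‖ ≤ C * √K ^ (s.card - 1) * (√(1 + ‖w‖) * √‖w - p j‖)⁻¹ := by
  classical
  set r := √(1 + ‖w‖) with hr
  have hr1 : 1 ≤ r := one_le_sqrt.2 (by linarith [norm_nonneg w])
  have hr2 : (1 + ‖w‖) ^ n = r ^ (2 * n) := by
    rw [pow_mul, hr, sq_sqrt (by positivity)]
  have hpow : r ^ (s.card - 1) ≤ √K ^ (s.card - 1) * ∏ k ∈ s.erase j, √‖w - p k‖ := by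
    rw [← Finset.card_erase_of_mem hj, ← Finset.prod_const, ← Finset.prod_const,
      ← Finset.prod_mul_distrib]
    refine Finset.prod_le_prod (fun k _ => by positivity) fun k hk => ?_
    rw [← sqrt_mul hK.le]
    exact sqrt_le_sqrt (hfar k (Finset.mem_of_mem_erase hk) (Finset.ne_of_mem_erase hk))
  set P := ∏ k ∈ s.erase j, √‖w - p k‖
  have hP : 0 < P := Finset.prod_pos fun k hk => sqrt_pos.2 <| pos_of_mul_pos_right
    ((by positivity : 0 < 1 + ‖w‖).trans_le
      (hfar k (Finset.mem_of_mem_erase hk) (Finset.ne_of_mem_erase hk))) hK.le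
  have hnum : ‖v‖ * r ≤ C * √K ^ (s.card - 1) * P := calc
    ‖v‖ * r ≤ C * r ^ (2 * n) * r := by rw [← hr2]; gcongr
    _ = C * r ^ (2 * n + 1) := by ring
    _ ≤ C * r ^ (s.card - 1) :=
      mul_le_mul_of_nonneg_left (pow_le_pow_right₀ hr1 (by omega)) hC
    _ ≤ C * (√K ^ (s.card - 1) * P) := by gcongr
    _ = C * √K ^ (s.card - 1) * P := by ring
  rw [norm_div, hq, ← Finset.mul_prod_erase s _ hj, mul_comm √‖w - p j‖, ← div_div, mul_inv,
    ← mul_assoc, ← div_eq_mul_inv, ← div_eq_mul_inv]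
  exact div_le_div_of_nonneg_right ((div_le_div_iff₀ hP (by positivity)).2 hnum) (sqrt_nonneg _)

theorem exists_norm_aeval_div_le_sum {ι : Type*} {s : Finset ι} {p : ι → ℂ} (hp : InjOn p s)
    {Q : ℂ → ℂ} (hQ : ∀ w, ‖Q w‖ = ∏ e ∈ s, √‖w - p e‖) {T : Polynomial ℝ}
    (hT : 2 * (T.natDegree + 1) ≤ s.card) :
    ∃ C, 0 ≤ C ∧ ∀ w, ‖Polynomial.aeval w T / Q w‖ ≤
      C * ∑ e ∈ s, (√(1 + ‖w‖) * √‖w - p e‖)⁻¹ := by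
  obtain ⟨C, hC, hTC⟩ := exists_norm_aeval_le (A := ℂ) T
  obtain ⟨K, hK, hfar⟩ :=
    exists_one_add_norm_le_mul_norm_sub (Finset.card_pos.1 (by omega)) hp
  refine ⟨C * √K ^ (s.card - 1), by positivity, fun w => ?_⟩
  obtain ⟨j, hj, hjw⟩ := hfar w
  refine (norm_div_le_of_nearest (hQ w) hC hK (hTC w) hT hj hjw).trans ?_
  gcongr
  exact Finset.single_le_sum (f := fun e => (√(1 + ‖w‖) * √‖w - p e‖)⁻¹)
    (fun e _ => by positivity) hj

theorem tendsto_aeval_div_cobounded {ι : Type*} {s : Finset ι} {p : ι → ℂ} (hp : InjOn p s)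
    {Q : ℂ → ℂ} (hQ : ∀ w, ‖Q w‖ = ∏ e ∈ s, √‖w - p e‖) {T : Polynomial ℝ}
    (hT : 2 * (T.natDegree + 1) ≤ s.card) :
    Tendsto (fun w => Polynomial.aeval w T / Q w) (cobounded ℂ) (𝓝 0) := by
  obtain ⟨C, -, hC⟩ := exists_norm_aeval_div_le_sum hp hQ hT
  refine squeeze_zero_norm hC ?_
  have hterm (e : ι) : Tendsto (fun w => (√(1 + ‖w‖) * √‖w - p e‖)⁻¹) (cobounded ℂ) (𝓝 0) := by
    refine tendsto_inv_atTop_zero.comp (Tendsto.atTop_mul_atTop₀ ?_ ?_)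
    · exact tendsto_sqrt_atTop.comp (tendsto_atTop_add_const_left _ 1 tendsto_norm_cobounded_atTop)
    · refine tendsto_sqrt_atTop.comp (tendsto_atTop_mono (fun w => norm_sub_norm_le w (p e)) ?_)
      exact tendsto_atTop_add_const_right _ _ tendsto_norm_cobounded_atTop
  simpa using (tendsto_finsetSum s fun e _ => hterm e).const_mul C

theorem integrableOn_inv_sqrt_abs_Icc : IntegrableOn (fun s : ℝ => (√|s|)⁻¹) (Icc (-1) 1) := by
  have h : IntervalIntegrable (fun s : ℝ => (√|s|)⁻¹) volume 0 1 := by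
    refine (intervalIntegral.intervalIntegrable_rpow' (r := -(1 / 2)) (by norm_num)).congr_uIoo ?_
    intro s hs
    rw [uIoo_of_le zero_le_one] at hs
    simp only
    rw [abs_of_pos hs.1, sqrt_eq_rpow, rpow_neg hs.1.le]
  have h' : IntervalIntegrable (fun s : ℝ => (√|s|)⁻¹) volume (-1) 0 := by
    simpa using (h.comp_sub_left 0).symm
  exact (intervalIntegrable_iff_integrableOn_Icc_of_le (by norm_num)).1 (h'.trans h)

theorem integrable_one_add_abs_rpow_mul_inv_sqrt_abs_sub (e : ℝ) :
    Integrable fun t : ℝ => (1 + |t|) ^ (-(3 / 2) : ℝ) * (√|t - e|)⁻¹ := by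
  have hdecay : Integrable fun t : ℝ => (1 + |t|) ^ (-(3 / 2) : ℝ) := by
    simpa using integrable_one_add_norm (E := ℝ) (μ := volume) (r := 3 / 2) (by norm_num)
  have hlocal : Integrable fun t => (Icc (-1) 1).indicator (fun s : ℝ => (√|s|)⁻¹) (t - e) :=
    (integrableOn_inv_sqrt_abs_Icc.integrable_indicator measurableSet_Icc).comp_sub_right e
  refine (hdecay.add hlocal).mono' (by fun_prop) (Eventually.of_forall fun t => ?_)
  have hle_one : (1 + |t|) ^ (-(3 / 2) : ℝ) ≤ 1 :=
    rpow_le_one_of_one_le_of_nonpos (by linarith [abs_nonneg t]) (by norm_num)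
  have hnonneg : 0 ≤ (1 + |t|) ^ (-(3 / 2) : ℝ) := by positivity
  have hinv : 0 ≤ (√|t - e|)⁻¹ := by positivity
  rw [norm_of_nonneg (by positivity), Pi.add_apply]
  by_cases h : t - e ∈ Icc (-1 : ℝ) 1
  · rw [indicator_of_mem h]
    nlinarith
  · rw [indicator_of_notMem h, add_zero]
    have hfar : 1 ≤ √|t - e| := one_le_sqrt.2 (le_of_not_ge fun h' => h (abs_le.1 h'))
    exact mul_le_of_le_one_right hnonneg (inv_le_one_of_one_le₀ hfar)

theorem exists_integrable_norm_aeval_div_le {E : Finset ℝ} {Q : ℂ → ℂ}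
    (hQ : ∀ w, ‖Q w‖ = ∏ e ∈ E, √‖w - e‖) {T : Polynomial ℝ}
    (hT : 2 * (T.natDegree + 1) ≤ E.card) :
    ∃ G : ℝ → ℝ, Integrable G ∧ ∀ y t : ℝ, t ∉ E →
      ‖Polynomial.aeval (t + y * I : ℂ) T / Q (t + y * I)‖ ≤ G t * (1 + |t|) := by
  obtain ⟨C, hC, hbound⟩ := exists_norm_aeval_div_le_sum Complex.ofReal_injective.injOn hQ hT
  refine ⟨fun t => C * ∑ e ∈ E, (1 + |t|) ^ (-(3 / 2) : ℝ) * (√|t - e|)⁻¹,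
    (integrable_finsetSum _ fun e _ =>
      integrable_one_add_abs_rpow_mul_inv_sqrt_abs_sub e).const_mul C,
    fun y t ht => (hbound _).trans ?_⟩
  rw [mul_assoc, Finset.sum_mul]
  gcongr with e he
  have hpos : 0 < |t - e| := abs_pos.2 (sub_ne_zero.2 fun h => ht (h ▸ he))
  have hnorm : |t| ≤ ‖(t + y * I : ℂ)‖ := by simpa using Complex.abs_re_le_norm (t + y * I)
  have hnorm_sub : |t - e| ≤ ‖(t + y * I : ℂ) - e‖ := by
    simpa using Complex.abs_re_le_norm (t + y * I - e)
  calc (√(1 + ‖(t + y * I : ℂ)‖) * √‖(t + y * I : ℂ) - e‖)⁻¹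
      ≤ (√(1 + |t|) * √|t - e|)⁻¹ := by gcongr
    _ = (1 + |t|) ^ (-(3 / 2) : ℝ) * (√|t - e|)⁻¹ * (1 + |t|) := by
      rw [mul_right_comm, ← rpow_add_one (by positivity), mul_inv, sqrt_eq_rpow (1 + |t|),
        ← rpow_neg (by positivity)]
      norm_num

/-! ### The branch of `√R` -/

/-- The branch of `√((z - a) (z - b))` that is analytic off the segment `[a, b]` and asymptotic to
`z` at infinity. On `(a, b)` it takes its boundary values from the upper half-plane. -/
noncomputable def cutSqrt (a b : ℝ) (z : ℂ) : ℂ :=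
  (z - a) * Complex.sqrt ((z - b) / (z - a))

theorem cutSqrt_sq (a b : ℝ) (z : ℂ) : cutSqrt a b z ^ 2 = (z - a) * (z - b) := by
  have hsqrt (w : ℂ) : Complex.sqrt w ^ 2 = w := Complex.cpow_ofNat_inv_pow w 2
  rw [cutSqrt, mul_pow, hsqrt]
  rcases eq_or_ne (z - a) 0 with h | h
  · simp [h]
  · field_simp

theorem norm_cutSqrt (a b : ℝ) (z : ℂ) : ‖cutSqrt a b z‖ = √‖z - a‖ * √‖z - b‖ := by
  rw [← sqrt_mul (norm_nonneg _), ← norm_mul, ← cutSqrt_sq, norm_pow, sqrt_sq (norm_nonneg _)]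

theorem div_sub_mem_slitPlane {a b : ℝ} (hab : a ≤ b) {z : ℂ}
    (hz : z ∉ Complex.ofReal '' Icc a b) : (z - b) / (z - a) ∈ Complex.slitPlane := by
  have hza : z - a ≠ 0 := fun h => hz ⟨a, left_mem_Icc.2 hab, (sub_eq_zero.1 h).symm⟩
  rw [Complex.mem_slitPlane_iff_not_le_zero, Complex.le_def]
  rintro ⟨hre, him⟩
  set r := ((z - b) / (z - a)).re
  have hr : r ≤ 0 := hre
  have hr1 : 0 < 1 - r := by linarith
  have hreal : (z - b) / (z - a) = r := Complex.ext rfl him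
  rw [div_eq_iff hza] at hreal
  have hz_eq : z = ((b - r * a) / (1 - r) : ℝ) := by
    have : (1 - r : ℂ) ≠ 0 := by exact_mod_cast hr1.ne'
    push_cast
    rw [eq_div_iff this]
    linear_combination hreal
  refine hz ⟨_, ⟨?_, ?_⟩, hz_eq.symm⟩
  · rw [le_div_iff₀ hr1]
    nlinarith
  · rw [div_le_iff₀ hr1]
    nlinarith

theorem differentiableAt_cutSqrt {a b : ℝ} (hab : a ≤ b) {z : ℂ}
    (hz : z ∉ Complex.ofReal '' Icc a b) : DifferentiableAt ℂ (cutSqrt a b) z := by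
  have hza : z - a ≠ 0 := fun h => hz ⟨a, left_mem_Icc.2 hab, (sub_eq_zero.1 h).symm⟩
  have hquot : DifferentiableAt ℂ (fun w : ℂ => (w - b) / (w - a)) z :=
    DifferentiableAt.div (by fun_prop) (by fun_prop) hza
  have hsqrt : DifferentiableAt ℂ (fun w : ℂ => Complex.sqrt ((w - b) / (w - a))) z :=
    DifferentiableAt.comp (g := Complex.sqrt) z
      (Complex.differentiableAt_sqrt (div_sub_mem_slitPlane hab hz)) hquot
  exact DifferentiableAt.mul (by fun_prop) hsqrt

theorem tendsto_sub_div_cobounded (u : ℂ) :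
    Tendsto (fun z : ℂ => (z - u) / z) (cobounded ℂ) (𝓝 1) := by
  have h : Tendsto (fun z : ℂ => 1 - u * z⁻¹) (cobounded ℂ) (𝓝 1) := by
    simpa using (tendsto_inv₀_cobounded.const_mul u).const_sub 1
  refine h.congr' ?_
  filter_upwards [eventually_ne_cobounded 0] with z hz
  field_simp

theorem tendsto_cutSqrt_div_cobounded (a b : ℝ) :
    Tendsto (fun z => cutSqrt a b z / z) (cobounded ℂ) (𝓝 1) := by
  have hquot : Tendsto (fun z : ℂ => (z - b) / (z - a)) (cobounded ℂ) (𝓝 1) := by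
    have h := (tendsto_sub_div_cobounded b).div (tendsto_sub_div_cobounded a) one_ne_zero
    rw [div_one] at h
    refine h.congr' ?_
    filter_upwards [eventually_ne_cobounded 0] with z hz using div_div_div_cancel_right₀ hz _ _
  have hsqrt := (Complex.continuousAt_sqrt (z := 1) (by simp)).tendsto.comp hquot
  rw [Complex.sqrt_one] at hsqrt
  simpa [cutSqrt, mul_div_right_comm] using (tendsto_sub_div_cobounded a).mul hsqrt

theorem continuousOn_complexSqrt_im_nonneg : ContinuousOn Complex.sqrt {z | 0 ≤ z.im} := by
  have h : Continuous fun z : ℂ => (√((‖z‖ + z.re) / 2) + √((‖z‖ - z.re) / 2) * I : ℂ) := by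
    fun_prop
  exact h.continuousOn.congr fun z hz => by
    have hz : 0 ≤ z.im := hz
    rw [Complex.sqrt_eq_real_add_ite, if_pos hz, one_mul]

theorem div_sub_im (a b : ℝ) (z : ℂ) :
    ((z - b) / (z - a)).im = (b - a) * z.im / Complex.normSq (z - a) := by
  simp only [Complex.div_im, Complex.sub_im, Complex.sub_re, Complex.ofReal_im, Complex.ofReal_re]
  ring

theorem tendsto_cutSqrt_nhdsGT {a b t : ℝ} (hab : a ≤ b) (ht : t ≠ a) :
    Tendsto (fun y : ℝ => cutSqrt a b (t + y * I)) (𝓝[>] 0) (𝓝 (cutSqrt a b t)) := by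
  have hta : (t : ℂ) - a ≠ 0 := sub_ne_zero.2 (by exact_mod_cast ht)
  have hquot : Tendsto (fun y : ℝ => (t + y * I - b) / (t + y * I - a)) (𝓝[>] 0)
      (𝓝[{z | 0 ≤ z.im}] ((t - b) / (t - a) : ℂ)) := by
    refine tendsto_nhdsWithin_iff.2 ⟨((tendsto_vertical t).sub_const _).div
      ((tendsto_vertical t).sub_const _) hta, ?_⟩
    filter_upwards [self_mem_nhdsWithin] with y hy
    have hy : 0 < y := hy
    have : 0 ≤ b - a := sub_nonneg.2 hab
    change 0 ≤ Complex.im _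
    rw [div_sub_im, show (t + y * I : ℂ).im = y by simp]
    have := Complex.normSq_nonneg (t + y * I - a)
    positivity
  have him : 0 ≤ ((t - b) / (t - a) : ℂ).im := by rw [div_sub_im]; simp
  exact ((tendsto_vertical t).sub_const _).mul
    ((continuousOn_complexSqrt_im_nonneg _ him).tendsto.comp hquot)

theorem abs_mul_sqrt_abs_div {x : ℝ} (hx : x ≠ 0) (y : ℝ) : |x| * √|y / x| = √|x * y| := by
  rw [← sqrt_sq (abs_nonneg x), ← sqrt_mul (sq_nonneg _), sq, mul_assoc, ← abs_mul,
    mul_div_cancel₀ _ hx, ← abs_mul]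

theorem cutSqrt_ofReal_of_div_nonneg {a b t : ℝ} (ht : 0 ≤ (t - b) / (t - a)) :
    cutSqrt a b t = ((t - a) * √|(t - b) / (t - a)| : ℝ) := by
  rw [cutSqrt, show ((t : ℂ) - b) / (t - a) = ((t - b) / (t - a) : ℝ) by push_cast; rfl,
    Complex.sqrt_of_nonneg (by exact_mod_cast ht), Complex.ofReal_re, abs_of_nonneg ht]
  push_cast
  rfl

theorem cutSqrt_of_lt {a b t : ℝ} (hta : t < a) (htb : t < b) :
    cutSqrt a b t = (-√|(t - a) * (t - b)| : ℝ) := by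
  rw [cutSqrt_ofReal_of_div_nonneg
      (div_nonneg_of_nonpos (sub_neg.2 htb).le (sub_neg.2 hta).le),
    ← abs_mul_sqrt_abs_div (sub_neg.2 hta).ne, abs_of_neg (sub_neg.2 hta), neg_mul, neg_neg]

theorem cutSqrt_of_gt {a b t : ℝ} (hat : a < t) (hbt : b < t) :
    cutSqrt a b t = (√|(t - a) * (t - b)| : ℝ) := by
  rw [cutSqrt_ofReal_of_div_nonneg (div_nonneg (sub_pos.2 hbt).le (sub_pos.2 hat).le),
    ← abs_mul_sqrt_abs_div (sub_pos.2 hat).ne', abs_of_pos (sub_pos.2 hat)]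

theorem cutSqrt_of_mem_Ioo {a b t : ℝ} (ht : t ∈ Ioo a b) :
    cutSqrt a b t = I * (√|(t - a) * (t - b)| : ℝ) := by
  have hta : 0 < t - a := sub_pos.2 ht.1
  have hneg : 0 ≤ -((t - b) / (t - a)) :=
    neg_nonneg.2 (div_nonpos_of_nonpos_of_nonneg (sub_neg.2 ht.2).le hta.le)
  rw [cutSqrt, show ((t : ℂ) - b) / (t - a) = -(-((t - b) / (t - a)) : ℝ) by push_cast; ring,
    Complex.sqrt_neg_of_nonneg (by exact_mod_cast hneg), Complex.sqrt_of_nonneg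
      (by exact_mod_cast hneg), Complex.ofReal_re, ← abs_mul_sqrt_abs_div hta.ne',
    abs_of_pos hta, ← abs_of_nonneg hneg, abs_neg]
  push_cast
  ring

theorem cutSqrt_im_eq_zero {a b t : ℝ} (hab : a ≤ b) (ht : t ∉ Ioo a b) :
    (cutSqrt a b t).im = 0 := by
  have hdiv : 0 ≤ (t - b) / (t - a) := by
    rcases le_or_gt t a with h | h
    · exact div_nonneg_of_nonpos (sub_nonpos.2 (h.trans hab)) (sub_nonpos.2 h)
    · exact div_nonneg (sub_nonneg.2 (not_lt.1 fun hb => ht ⟨h, hb⟩)) (sub_pos.2 h).le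
  rw [cutSqrt_ofReal_of_div_nonneg hdiv, Complex.ofReal_im]

section ProdCutSqrt

variable {ι : Type*} {s : Finset ι} {a b : ι → ℝ}

/-- The closed intervals `[a i, b i]`, `i ∈ s`, are nondegenerate and pairwise disjoint. -/
structure DisjointIntervals (s : Finset ι) (a b : ι → ℝ) : Prop where
  lt : ∀ i ∈ s, a i < b i
  disjoint : (s : Set ι).PairwiseDisjoint fun i => Icc (a i) (b i)

/-- The set of all endpoints `a i`, `b i`: the branch points of `√R`. -/
noncomputable def endpoints (s : Finset ι) (a b : ι → ℝ) : Finset ℝ :=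
  s.biUnion fun i => {a i, b i}

/-- The branch of `√(∏ i ∈ s, (z - a i) (z - b i))` cut along the intervals `[a i, b i]` and
asymptotic to `z ^ #s` at infinity. -/
noncomputable def prodCutSqrt (s : Finset ι) (a b : ι → ℝ) (z : ℂ) : ℂ :=
  ∏ i ∈ s, cutSqrt (a i) (b i) z

theorem prodCutSqrt_sq (z : ℂ) :
    prodCutSqrt s a b z ^ 2 = ∏ i ∈ s, (z - a i) * (z - b i) := by
  simp only [prodCutSqrt, ← Finset.prod_pow, cutSqrt_sq]

theorem tendsto_prodCutSqrt_div_pow :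
    Tendsto (fun z => prodCutSqrt s a b z / z ^ s.card) (cobounded ℂ) (𝓝 1) := by
  simpa [prodCutSqrt, Finset.prod_div_distrib] using
    tendsto_finsetProd s fun i _ => tendsto_cutSqrt_div_cobounded (a i) (b i)

theorem mem_endpoints {t : ℝ} : t ∈ endpoints s a b ↔ ∃ i ∈ s, t = a i ∨ t = b i := by
  simp [endpoints]

theorem prodCutSqrt_ne_zero {z : ℂ} (hz : ∀ t ∈ endpoints s a b, z ≠ t) :
    prodCutSqrt s a b z ≠ 0 := by
  refine fun h => Finset.prod_ne_zero_iff.2 (fun i hi => mul_ne_zero ?_ ?_)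
    ((prodCutSqrt_sq z).symm.trans (by rw [h, sq, zero_mul]))
  · exact sub_ne_zero.2 (hz _ (mem_endpoints.2 ⟨i, hi, Or.inl rfl⟩))
  · exact sub_ne_zero.2 (hz _ (mem_endpoints.2 ⟨i, hi, Or.inr rfl⟩))

namespace DisjointIntervals

theorem pairwiseDisjoint_pair (h : DisjointIntervals s a b) :
    (s : Set ι).PairwiseDisjoint fun i => ({a i, b i} : Finset ℝ) := fun i hi j hj hij =>
  Finset.disjoint_coe.1 <| (h.disjoint hi hj hij).mono
    (by simpa [insert_subset_iff] using (h.lt i hi).le)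
    (by simpa [insert_subset_iff] using (h.lt j hj).le)

theorem card_endpoints (h : DisjointIntervals s a b) : (endpoints s a b).card = 2 * s.card := by
  rw [endpoints, Finset.card_biUnion h.pairwiseDisjoint_pair,
    Finset.sum_congr rfl fun i hi => Finset.card_pair (h.lt i hi).ne, Finset.sum_const,
    smul_eq_mul, mul_comm]

theorem prod_endpoints (h : DisjointIntervals s a b) {M : Type*} [CommMonoid M] (φ : ℝ → M) :
    ∏ e ∈ endpoints s a b, φ e = ∏ i ∈ s, φ (a i) * φ (b i) := by
  rw [endpoints, Finset.prod_biUnion h.pairwiseDisjoint_pair]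
  exact Finset.prod_congr rfl fun i hi => Finset.prod_pair (h.lt i hi).ne

theorem norm_prodCutSqrt (h : DisjointIntervals s a b) (z : ℂ) :
    ‖prodCutSqrt s a b z‖ = ∏ e ∈ endpoints s a b, √‖z - e‖ := by
  simp only [prodCutSqrt, norm_prod, norm_cutSqrt, h.prod_endpoints fun e => √‖z - e‖]

theorem prodCutSqrt_ne_zero_of_notMem (h : DisjointIntervals s a b) {z : ℂ}
    (hz : z ∉ Complex.ofReal '' ⋃ i ∈ s, Icc (a i) (b i)) : prodCutSqrt s a b z ≠ 0 := by
  refine prodCutSqrt_ne_zero fun t ht hzt => hz ⟨t, ?_, hzt.symm⟩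
  obtain ⟨i, hi, rfl | rfl⟩ := mem_endpoints.1 ht
  · exact mem_biUnion hi (left_mem_Icc.2 (h.lt i hi).le)
  · exact mem_biUnion hi (right_mem_Icc.2 (h.lt i hi).le)

theorem differentiableAt_prodCutSqrt (h : DisjointIntervals s a b) {z : ℂ}
    (hz : z ∉ Complex.ofReal '' ⋃ i ∈ s, Icc (a i) (b i)) :
    DifferentiableAt ℂ (prodCutSqrt s a b) z := by
  refine DifferentiableAt.fun_finsetProd fun i hi => differentiableAt_cutSqrt (h.lt i hi).le ?_
  exact fun hzi => hz (image_mono (subset_biUnion_of_mem (u := fun i => Icc (a i) (b i)) hi) hzi)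

theorem tendsto_prodCutSqrt_nhdsGT (h : DisjointIntervals s a b) {t : ℝ}
    (ht : t ∉ endpoints s a b) :
    Tendsto (fun y : ℝ => prodCutSqrt s a b (t + y * I)) (𝓝[>] 0) (𝓝 (prodCutSqrt s a b t)) :=
  tendsto_finsetProd s fun i hi => tendsto_cutSqrt_nhdsGT (h.lt i hi).le fun hta =>
    ht (mem_endpoints.2 ⟨i, hi, Or.inl hta⟩)

theorem differentiableAt_aeval_div_prodCutSqrt (h : DisjointIntervals s a b) (T : Polynomial ℝ)
    {z : ℂ} (hz : z ∉ Complex.ofReal '' ⋃ i ∈ s, Icc (a i) (b i)) :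
    DifferentiableAt ℂ (fun w => Polynomial.aeval w T / prodCutSqrt s a b w) z :=
  T.differentiableAt_aeval.div (h.differentiableAt_prodCutSqrt hz)
    (h.prodCutSqrt_ne_zero_of_notMem hz)

theorem tendsto_aeval_div_prodCutSqrt_nhdsGT (h : DisjointIntervals s a b) (T : Polynomial ℝ)
    {t : ℝ} (ht : t ∉ endpoints s a b) :
    Tendsto (fun y : ℝ => Polynomial.aeval (t + y * I : ℂ) T / prodCutSqrt s a b (t + y * I))
      (𝓝[>] 0) (𝓝 (Polynomial.aeval (t : ℂ) T / prodCutSqrt s a b t)) :=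
  ((T.differentiableAt_aeval.continuousAt.tendsto).comp (tendsto_vertical t)).div
    (h.tendsto_prodCutSqrt_nhdsGT ht) (prodCutSqrt_ne_zero fun _ he hte =>
      ht (Complex.ofReal_injective hte ▸ he))

theorem hasHalfPlaneBoundary_aeval_div (h : DisjointIntervals s a b) {T : Polynomial ℝ}
    (hT : T.natDegree < s.card) :
    HasHalfPlaneBoundary fun z => Polynomial.aeval z T / prodCutSqrt s a b z := by
  have hT' : 2 * (T.natDegree + 1) ≤ (endpoints s a b).card := by rw [h.card_endpoints]; omega
  have hae : ∀ᵐ t : ℝ, t ∉ endpoints s a b :=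
    measure_eq_zero_iff_ae_notMem.1 ((endpoints s a b).measure_zero _)
  refine ⟨fun z hz => ?_, ?_, ?_, ?_⟩
  · refine (h.differentiableAt_aeval_div_prodCutSqrt T ?_).differentiableWithinAt
    rintro ⟨t, -, rfl⟩
    exact lt_irrefl (0 : ℝ) hz
  · exact (tendsto_aeval_div_cobounded Complex.ofReal_injective.injOn h.norm_prodCutSqrt
      hT').mono_left inf_le_left
  · obtain ⟨G, hG, hbound⟩ := exists_integrable_norm_aeval_div_le h.norm_prodCutSqrt hT'
    exact ⟨G, hG, Eventually.of_forall fun y => hae.mono (hbound y)⟩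
  · filter_upwards [hae] with t ht using h.tendsto_aeval_div_prodCutSqrt_nhdsGT T ht

end DisjointIntervals

end ProdCutSqrt

/-! ### Analytic functions off a closed subset of the real line -/

theorem isPreconnected_compl_image_ofReal {S : Set ℝ} (hS : S ≠ univ) :
    IsPreconnected (Complex.ofReal '' S)ᶜ := by
  obtain ⟨t, ht⟩ := (ne_univ_iff_exists_notMem S).1 hS
  have hmem (z : ℂ) (hz : z.im ≠ 0) : z ∉ Complex.ofReal '' S := by
    rintro ⟨x, -, rfl⟩
    exact hz (Complex.ofReal_im x)
  have htS : (t : ℂ) ∈ (Complex.ofReal '' S)ᶜ := by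
    rintro ⟨x, hx, hxt⟩
    exact ht (Complex.ofReal_injective hxt ▸ hx)
  have hupper : IsPreconnected ((Complex.ofReal '' S)ᶜ ∩ {z | 0 ≤ z.im}) :=
    (convex_halfSpace_im_gt 0).isPreconnected.subset_closure
      (fun z (hz : 0 < z.im) => ⟨hmem z hz.ne', hz.le⟩)
      (by rw [Complex.closure_setOfPred_lt_im]; exact inter_subset_right)
  have hlower : IsPreconnected ((Complex.ofReal '' S)ᶜ ∩ {z | z.im ≤ 0}) :=
    (convex_halfSpace_im_lt 0).isPreconnected.subset_closure
      (fun z (hz : z.im < 0) => ⟨hmem z hz.ne, hz.le⟩)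
      (by rw [Complex.closure_setOfPred_im_lt]; exact inter_subset_right)
  have hinter : (((Complex.ofReal '' S)ᶜ ∩ {z | 0 ≤ z.im}) ∩
      ((Complex.ofReal '' S)ᶜ ∩ {z | z.im ≤ 0})).Nonempty := ⟨t, ⟨htS, by simp⟩, ⟨htS, by simp⟩⟩
  have hunion := hupper.union' hinter hlower
  rwa [← inter_union_distrib_left, (eq_univ_of_forall fun z => le_total 0 z.im :
    {z : ℂ | 0 ≤ z.im} ∪ {z | z.im ≤ 0} = univ), inter_univ] at hunion

theorem eqOn_of_sq_eq_of_tendsto_div_pow {U : Set ℂ} (hU : IsPreconnected U)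
    (hU_inf : U ∈ cobounded ℂ) {f g : ℂ → ℂ} (hf : ContinuousOn f U) (hg : ContinuousOn g U)
    (hsq : ∀ z ∈ U, f z ^ 2 = g z ^ 2) (hne : ∀ z ∈ U, g z ≠ 0) {n : ℕ}
    (hf_inf : Tendsto (fun z => f z / z ^ n) (cobounded ℂ) (𝓝 1))
    (hg_inf : Tendsto (fun z => g z / z ^ n) (cobounded ℂ) (𝓝 1)) : EqOn f g U := by
  refine (hU.eq_or_eq_neg_of_sq_eq hf hg hsq (hne _)).resolve_right fun hneg => ?_
  have hlim : Tendsto (fun z => f z / z ^ n) (cobounded ℂ) (𝓝 (-1)) := by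
    refine hg_inf.neg.congr' ?_
    filter_upwards [hU_inf] with z hz
    rw [hneg hz, Pi.neg_apply, neg_div]
  exact absurd (tendsto_nhds_unique hf_inf hlim) (by norm_num)

theorem exists_ball_le_norm_ofReal_sub {S : Set ℝ} (hS : IsClosed S) {z : ℂ}
    (hz : z ∉ Complex.ofReal '' S) :
    ∃ δ > 0, ∀ w ∈ Metric.ball z δ, ∀ t ∈ S, δ ≤ ‖(t : ℂ) - w‖ := by
  have hclosed : IsClosed (Complex.ofReal '' S) :=
    Complex.isometry_ofReal.isClosedEmbedding.isClosedMap S hS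
  obtain ⟨δ, hδ, hball⟩ := Metric.isOpen_iff.1 hclosed.isOpen_compl z hz
  refine ⟨δ / 2, half_pos hδ, fun w hw t ht => ?_⟩
  have htz : δ ≤ dist (t : ℂ) z := not_lt.1 fun h => hball h ⟨t, ht, rfl⟩
  rw [← dist_eq_norm]
  linarith [dist_triangle (t : ℂ) w z, Metric.mem_ball.1 hw]

section CauchyTransform

variable {S : Set ℝ} {φ : ℝ → ℂ}

theorem norm_div_pow_le_of_forall_notMem_eq_zero (hφS : ∀ t ∉ S, φ t = 0) {w : ℂ} {δ : ℝ}
    (hδ : 0 < δ) (hw : ∀ t ∈ S, δ ≤ ‖(t : ℂ) - w‖) (n : ℕ) (t : ℝ) :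
    ‖φ t / (t - w) ^ n‖ ≤ ‖φ t‖ / δ ^ n := by
  by_cases ht : t ∈ S
  · rw [norm_div, norm_pow]
    gcongr
    exact hw t ht
  · simp [hφS t ht]

theorem aestronglyMeasurable_div_sub_pow (hφ : AEStronglyMeasurable φ) (w : ℂ) (n : ℕ) :
    AEStronglyMeasurable fun t : ℝ => φ t / (t - w) ^ n :=
  hφ.div₀ (by fun_prop)

theorem integrable_div_sub_of_notMem (hS : IsClosed S) (hφ : Integrable φ)
    (hφS : ∀ t ∉ S, φ t = 0) {z : ℂ} (hz : z ∉ Complex.ofReal '' S) :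
    Integrable fun t : ℝ => φ t / (t - z) := by
  obtain ⟨δ, hδ, hfar⟩ := exists_ball_le_norm_ofReal_sub hS hz
  have hbound := norm_div_pow_le_of_forall_notMem_eq_zero hφS hδ
    (hfar z (Metric.mem_ball_self hδ)) 1
  have hmeas := aestronglyMeasurable_div_sub_pow hφ.aestronglyMeasurable z 1
  simp only [pow_one] at hbound hmeas
  exact (hφ.norm.div_const δ).mono' hmeas (Eventually.of_forall hbound)

theorem differentiableAt_integral_div_sub (hS : IsClosed S) (hφ : Integrable φ)
    (hφS : ∀ t ∉ S, φ t = 0) {z : ℂ} (hz : z ∉ Complex.ofReal '' S) :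
    DifferentiableAt ℂ (fun w => ∫ t : ℝ, φ t / (t - w)) z := by
  obtain ⟨δ, hδ, hfar⟩ := exists_ball_le_norm_ofReal_sub hS hz
  have hmeas := aestronglyMeasurable_div_sub_pow hφ.aestronglyMeasurable
  refine (hasDerivAt_integral_of_dominated_loc_of_deriv_le
    (F' := fun w t => φ t / (t - w) ^ 2) (bound := fun t => ‖φ t‖ / δ ^ 2)
    (Metric.ball_mem_nhds z hδ) (Eventually.of_forall fun w => by simpa using hmeas w 1)
    (integrable_div_sub_of_notMem hS hφ hφS hz) (hmeas z 2)
    (Eventually.of_forall fun t w hw =>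
      norm_div_pow_le_of_forall_notMem_eq_zero hφS hδ (hfar w hw) 2 t)
    (hφ.norm.div_const _) (Eventually.of_forall fun t w hw => ?_)).2.differentiableAt
  by_cases ht : t ∈ S
  · have hne : (t : ℂ) - w ≠ 0 := norm_pos_iff.1 (hδ.trans_le (hfar w hw t ht))
    simpa using (hasDerivAt_const w (φ t)).fun_div ((hasDerivAt_id w).const_sub (t : ℂ)) hne
  · simpa [hφS t ht] using hasDerivAt_const w (0 : ℂ)

end CauchyTransform

theorem eqOn_compl_image_ofReal {S : Set ℝ} (hS : IsClosed S) (hS' : S ≠ univ) {f g : ℂ → ℂ}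
    (hf : DifferentiableOn ℂ f (Complex.ofReal '' S)ᶜ)
    (hg : DifferentiableOn ℂ g (Complex.ofReal '' S)ᶜ) (hfg : EqOn f g upperHalfPlaneSet) :
    EqOn f g (Complex.ofReal '' S)ᶜ := by
  have hopen : IsOpen (Complex.ofReal '' S)ᶜ :=
    (Complex.isometry_ofReal.isClosedEmbedding.isClosedMap S hS).isOpen_compl
  have hI : I ∈ upperHalfPlaneSet := by simp
  have hIS : I ∈ (Complex.ofReal '' S)ᶜ := by
    rintro ⟨x, -, hx⟩
    simpa using congrArg Complex.im hx
  exact (hf.analyticOnNhd hopen).eqOn_of_preconnected_of_eventuallyEq (hg.analyticOnNhd hopen)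
    (isPreconnected_compl_image_ofReal hS') hIS
    (hfg.eventuallyEq_of_mem (isOpen_upperHalfPlaneSet.mem_nhds hI))

/-! ### Principal values -/

section PrincipalValue

variable {v : ℝ → ℝ} {x : ℝ}

theorem integrable_sub_reflect_div (hv : Integrable v)
    (hx : (fun t => v t - v x) =O[𝓝 x] fun t => t - x) :
    Integrable fun s => (v (x + s) - v (x - s)) / s := by
  obtain ⟨C, hC0, hC⟩ := hx.exists_nonneg
  obtain ⟨δ, hδ, hball⟩ := Metric.eventually_nhds_iff.1 hC.bound
  have hplus : Integrable fun s => v (x + s) := hv.comp_add_left x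
  have hminus : Integrable fun s => v (x - s) := hv.comp_sub_left x
  have hmajorant : Integrable fun s =>
      (Ioo (-δ) δ).indicator (fun _ => 2 * C) s + (‖v (x + s)‖ + ‖v (x - s)‖) / δ :=
    ((integrableOn_const measure_Ioo_lt_top.ne).integrable_indicator measurableSet_Ioo).add
      ((hplus.norm.add hminus.norm).div_const δ)
  refine hmajorant.mono' ((hplus.sub hminus).aestronglyMeasurable.div₀
    measurable_id.aestronglyMeasurable) (Eventually.of_forall fun s => ?_)
  rw [norm_div]
  by_cases hs : s ∈ Ioo (-δ) δ
  · have hnear (u : ℝ) (hu : |u| = |s|) : ‖v (x + u) - v x‖ ≤ C * ‖s‖ := by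
      simpa [hu] using hball (y := x + u) (by simpa [hu] using abs_lt.2 hs)
    have hdiff : ‖v (x + s) - v (x - s)‖ ≤ 2 * C * ‖s‖ := by
      have := norm_sub_le (v (x + s) - v x) (v (x + -s) - v x)
      rw [sub_sub_sub_cancel_right, ← sub_eq_add_neg] at this
      have h1 := hnear s rfl
      have h2 := hnear (-s) (abs_neg s)
      rw [← sub_eq_add_neg] at h2
      linarith
    rw [indicator_of_mem hs]
    exact (div_le_of_le_mul₀ (norm_nonneg s) (by positivity) hdiff).trans
      (le_add_of_nonneg_right (by positivity))
  · have hδs : δ ≤ ‖s‖ := not_lt.1 fun h => hs (abs_lt.1 h)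
    rw [indicator_of_notMem hs, zero_add]
    gcongr
    exact norm_sub_le _ _

theorem tendsto_integral_mul_of_odd {κ : Type*} {l : Filter κ} [l.IsCountablyGenerated]
    {k : κ → ℝ → ℝ} (hv : Integrable fun s => (v (x + s) - v (x - s)) / s)
    (hodd : ∀ ε, (k ε).Odd) (hint : ∀ᶠ ε in l, Integrable fun t => v t * k ε (t - x))
    (hbound : ∀ ε s, |s * k ε s| ≤ 1)
    (hlim : ∀ s ≠ 0, Tendsto (fun ε => s * k ε s) l (𝓝 1)) :
    Tendsto (fun ε => ∫ t, v t * k ε (t - x)) l (𝓝 ((∫ s, (v (x + s) - v (x - s)) / s) / 2)) := by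
  have hfactor (ε : κ) (s : ℝ) : (v (x + s) - v (x - s)) / s * (s * k ε s) =
      v (x + s) * k ε s - v (x - s) * k ε s := by
    rcases eq_or_ne s 0 with rfl | hs
    · simp
    · field_simp
  have hplus : ∀ᶠ ε in l, Integrable fun s => v (x + s) * k ε s := by
    filter_upwards [hint] with ε hε using by simpa using hε.comp_add_left x
  have hminus : ∀ᶠ ε in l, Integrable fun s => v (x - s) * k ε s := by
    filter_upwards [hint] with ε hε using by simpa [(hodd ε) _] using (hε.comp_sub_left x).neg
  have hsymm : ∀ᶠ ε in l, (∫ s, (v (x + s) - v (x - s)) / s * (s * k ε s)) / 2 =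
      ∫ t, v t * k ε (t - x) := by
    filter_upwards [hplus, hminus] with ε hp hm
    have hp_eq : ∫ s, v (x + s) * k ε s = ∫ t, v t * k ε (t - x) := by
      simpa using integral_add_left_eq_self (fun t => v t * k ε (t - x)) x
    have hm_eq : ∫ s, v (x - s) * k ε s = -∫ t, v t * k ε (t - x) := by
      rw [← integral_sub_left_eq_self (fun t => v t * k ε (t - x)) volume x, ← integral_neg]
      simp [(hodd ε) _]
    simp only [hfactor]
    rw [integral_sub hp hm, hp_eq, hm_eq]
    ring
  refine Tendsto.congr' hsymm (Tendsto.div_const ?_ 2)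
  refine tendsto_integral_filter_of_dominated_convergence _ ?_ ?_ hv.norm ?_
  · filter_upwards [hplus, hminus] with ε hp hm
    simp only [hfactor]
    exact (hp.sub hm).aestronglyMeasurable
  · refine Eventually.of_forall fun ε => Eventually.of_forall fun s => ?_
    rw [norm_mul]
    exact mul_le_of_le_one_right (norm_nonneg _) (hbound ε s)
  · refine Eventually.of_forall fun s => ?_
    rcases eq_or_ne s 0 with rfl | hs
    · simpa using tendsto_const_nhds
    · simpa using (hlim s hs).const_mul ((v (x + s) - v (x - s)) / s)

theorem integrableOn_mul_inv_sub (hv : Integrable v) (x : ℝ) {ε : ℝ} (hε : 0 < ε) :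
    IntegrableOn (fun t => v t * (t - x)⁻¹) {t | ε ≤ |t - x|} := by
  refine hv.integrableOn.mul_bdd (c := ε⁻¹) (by fun_prop) ?_
  filter_upwards [ae_restrict_mem (measurableSet_le measurable_const (by fun_prop))] with t ht
  rw [norm_inv]
  exact inv_anti₀ hε ht

theorem integrable_ofReal_div_sub (hv : Integrable v) {z : ℂ} (hz : z.im ≠ 0) :
    Integrable fun t : ℝ => (v t : ℂ) / (t - z) := by
  simp only [div_eq_mul_inv]
  refine hv.ofReal.mul_bdd (c := |z.im|⁻¹) (by fun_prop) (Eventually.of_forall fun t => ?_)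
  rw [norm_inv]
  exact inv_anti₀ (abs_pos.2 hz) (by simpa using Complex.abs_im_le_norm (t - z))

theorem tendsto_setIntegral_mul_inv_sub (hv : Integrable v)
    (hx : (fun t => v t - v x) =O[𝓝 x] fun t => t - x) :
    Tendsto (fun ε => ∫ t in {t | ε ≤ |t - x|}, v t * (t - x)⁻¹) (𝓝[>] 0)
      (𝓝 ((∫ s, (v (x + s) - v (x - s)) / s) / 2)) := by
  have hmeas (ε : ℝ) : MeasurableSet {t | ε ≤ |t - x|} :=
    measurableSet_le measurable_const (by fun_prop)
  have htrunc (ε : ℝ) : {t | ε ≤ |t - x|}.indicator (fun t => v t * (t - x)⁻¹) =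
      fun t => v t * {s | ε ≤ |s|}.indicator (·⁻¹) (t - x) := by
    ext t
    by_cases ht : ε ≤ |t - x| <;> simp [indicator, ht]
  simp only [← integral_indicator (hmeas _), htrunc]
  refine tendsto_integral_mul_of_odd (integrable_sub_reflect_div hv hx) (fun ε s => ?_) ?_
    (fun ε s => ?_) fun s hs => ?_
  · by_cases hs : ε ≤ |s| <;> simp [indicator, hs, inv_neg]
  · filter_upwards [self_mem_nhdsWithin] with ε hε
    rw [← htrunc]
    exact (integrableOn_mul_inv_sub hv x hε).integrable_indicator (hmeas ε)
  · by_cases hs : ε ≤ |s| <;> simp [indicator, hs, abs_mul, mul_inv_le_one]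
  · refine tendsto_const_nhds.congr' ?_
    filter_upwards [nhdsWithin_le_nhds (Iio_mem_nhds (abs_pos.2 hs))] with ε hε
    rw [indicator_of_mem (show s ∈ {s | ε ≤ |s|} from (mem_Iio.1 hε).le), mul_inv_cancel₀ hs]

theorem re_ofReal_div_sub (r t x ε : ℝ) :
    ((r : ℂ) / (t - (x + ε * I))).re = r * ((t - x) / ((t - x) ^ 2 + ε ^ 2)) := by
  simp [Complex.div_re, Complex.normSq_apply]
  ring

theorem tendsto_re_integral_div_sub (hv : Integrable v)
    (hx : (fun t => v t - v x) =O[𝓝 x] fun t => t - x) :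
    Tendsto (fun ε : ℝ => (∫ t : ℝ, (v t : ℂ) / (t - (x + ε * I))).re) (𝓝[>] 0)
      (𝓝 ((∫ s, (v (x + s) - v (x - s)) / s) / 2)) := by
  have hint : ∀ᶠ ε : ℝ in 𝓝[>] 0, Integrable fun t : ℝ => (v t : ℂ) / (t - (x + ε * I)) := by
    filter_upwards [self_mem_nhdsWithin] with ε hε
    exact integrable_ofReal_div_sub hv (by simpa using (mem_Ioi.1 hε).ne')
  have hlim := tendsto_integral_mul_of_odd (l := 𝓝[>] 0)
    (k := fun ε s => s / (s ^ 2 + ε ^ 2)) (integrable_sub_reflect_div hv hx)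
    (fun ε s => by simp [neg_div])
    (hint.mono fun ε hε => by simpa [re_ofReal_div_sub] using hε.re) (fun ε s => ?_)
    fun s hs => ?_
  · refine hlim.congr' ?_
    filter_upwards [hint] with ε hε
    simp only [← re_ofReal_div_sub]
    exact integral_re hε
  · rw [← mul_div_assoc, ← sq, abs_of_nonneg (by positivity)]
    exact div_le_one_of_le₀ (le_add_of_nonneg_right (sq_nonneg ε)) (by positivity)
  · have h : ContinuousAt (fun ε : ℝ => s * (s / (s ^ 2 + ε ^ 2))) 0 :=
      ContinuousAt.mul (by fun_prop) (ContinuousAt.div (by fun_prop) (by fun_prop) (by simpa))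
    have h0 := h.tendsto.mono_left (nhdsWithin_le_nhds (s := Ioi 0))
    rwa [show s * (s / (s ^ 2 + 0 ^ 2)) = 1 by field_simp; simp] at h0

theorem tendsto_setIntegral_of_tendsto_re_integral (hv : Integrable v)
    (hx : (fun t => v t - v x) =O[𝓝 x] fun t => t - x) {c : ℝ}
    (hc : Tendsto (fun ε : ℝ => (∫ t : ℝ, (v t : ℂ) / (t - (x + ε * I))).re) (𝓝[>] 0) (𝓝 c)) :
    Tendsto (fun ε => ∫ t in {t | ε ≤ |t - x|}, v t * (t - x)⁻¹) (𝓝[>] 0) (𝓝 c) :=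
  tendsto_nhds_unique (tendsto_re_integral_div_sub hv hx) hc ▸
    tendsto_setIntegral_mul_inv_sub hv hx

end PrincipalValue

/-! ### The density on the cuts -/

section CutDensity

variable {ι : Type*} {s : Finset ι} {a b : ι → ℝ}

/-- The density of the signed measure whose Cauchy transform is `π T / √R`: the imaginary part of
the boundary values of `T / √R` from the upper half-plane. -/
noncomputable def cutDensity (s : Finset ι) (a b : ι → ℝ) (T : Polynomial ℝ) (t : ℝ) : ℝ :=
  (Polynomial.aeval (t : ℂ) T / prodCutSqrt s a b t).im

theorem sqrt_abs_prod (s : Finset ι) (x : ι → ℝ) : √|∏ i ∈ s, x i| = ∏ i ∈ s, √|x i| := by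
  rw [Finset.abs_prod, sqrt_prod s fun i _ => abs_nonneg (x i)]

theorem integral_eq_sum_setIntegral {α E : Type*} [MeasurableSpace α] {μ : Measure α}
    [NormedAddCommGroup E] [NormedSpace ℝ E] {u : ι → Set α}
    (hu : (s : Set ι).PairwiseDisjoint u) (hmeas : ∀ i ∈ s, MeasurableSet (u i)) {g : α → E}
    (hg : Integrable g μ) (hzero : ∀ t ∉ ⋃ i ∈ s, u i, g t = 0) :
    ∫ t, g t ∂μ = ∑ i ∈ s, ∫ t in u i, g t ∂μ := by
  rw [← integral_biUnion_finset s hmeas hu fun i _ => hg.integrableOn,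
    setIntegral_eq_integral_of_forall_compl_eq_zero hzero]

theorem isCompact_biUnion_Icc (s : Finset ι) (a b : ι → ℝ) :
    IsCompact (⋃ i ∈ s, Icc (a i) (b i)) :=
  s.isCompact_biUnion fun _ _ => isCompact_Icc

namespace DisjointIntervals

theorem pairwiseDisjoint_Ioo (h : DisjointIntervals s a b) :
    (s : Set ι).PairwiseDisjoint fun i => Ioo (a i) (b i) :=
  h.disjoint.mono_on fun _ _ => Ioo_subset_Icc_self

theorem notMem_endpoints (h : DisjointIntervals s a b) {i : ι} (hi : i ∈ s) {t : ℝ}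
    (ht : t ∈ Ioo (a i) (b i)) : t ∉ endpoints s a b := fun he => by
  obtain ⟨j, hj, hjt⟩ := mem_endpoints.1 he
  rcases eq_or_ne j i with rfl | hij
  · exact hjt.elim ht.1.ne' ht.2.ne
  · refine disjoint_right.1 (h.disjoint hj hi hij) (Ioo_subset_Icc_self ht) ?_
    rcases hjt with rfl | rfl
    exacts [left_mem_Icc.2 (h.lt j hj).le, right_mem_Icc.2 (h.lt j hj).le]

theorem interior_biUnion_Icc_subset (h : DisjointIntervals s a b) :
    interior (⋃ i ∈ s, Icc (a i) (b i)) ⊆ ⋃ i ∈ s, Ioo (a i) (b i) := by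
  classical
  intro x hx
  obtain ⟨i, hi, hxi⟩ := mem_iUnion₂.1 (interior_subset hx)
  have hothers : (⋃ j ∈ s.erase i, Icc (a j) (b j))ᶜ ∈ 𝓝 x := by
    refine (isCompact_biUnion_Icc _ a b).isClosed.isOpen_compl.mem_nhds fun hxj => ?_
    obtain ⟨j, hj, hxj⟩ := mem_iUnion₂.1 hxj
    exact disjoint_left.1 (h.disjoint (Finset.mem_of_mem_erase hj) hi (Finset.ne_of_mem_erase hj))
      hxj hxi
  refine mem_biUnion hi (interior_Icc (a := a i) ▸ mem_interior_iff_mem_nhds.2 ?_)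
  filter_upwards [mem_interior_iff_mem_nhds.1 hx, hothers] with y hy hy'
  obtain ⟨j, hj, hyj⟩ := mem_iUnion₂.1 hy
  by_cases hij : j = i
  · exact hij ▸ hyj
  · exact absurd (mem_biUnion (Finset.mem_coe.2 (Finset.mem_erase.2 ⟨hij, hj⟩)) hyj) hy'

open scoped Classical in
theorem cutSqrt_eq_of_mem_Ioo (h : DisjointIntervals s a b) {i j : ι} (hi : i ∈ s) (hj : j ∈ s)
    {t : ℝ} (ht : t ∈ Ioo (a i) (b i)) :
    cutSqrt (a j) (b j) t = (if a i < a j then -1 else 1) * (if j = i then I else 1) *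
      (√|(t - a j) * (t - b j)| : ℝ) := by
  rcases eq_or_ne j i with rfl | hij
  · simp [cutSqrt_of_mem_Ioo ht]
  have htj : t ∉ Icc (a j) (b j) :=
    disjoint_right.1 (h.disjoint hj hi hij) (Ioo_subset_Icc_self ht)
  have hajbj := h.lt j hj
  by_cases hjt : a j ≤ t
  · have hbt : b j < t := not_le.1 fun hb => htj ⟨hjt, hb⟩
    have haij : ¬ a i < a j := fun haij =>
      disjoint_right.1 (h.disjoint hj hi hij) ⟨haij.le, hjt.trans ht.2.le⟩
        (left_mem_Icc.2 hajbj.le)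
    rw [cutSqrt_of_gt (hajbj.trans hbt) hbt, if_neg haij, if_neg hij, one_mul, one_mul]
  · have hta : t < a j := not_le.1 hjt
    rw [cutSqrt_of_lt hta (hta.trans hajbj), if_pos (ht.1.trans hta), if_neg hij]
    simp

theorem prodCutSqrt_of_mem_Ioo (h : DisjointIntervals s a b) {i : ι} (hi : i ∈ s) {t : ℝ}
    (ht : t ∈ Ioo (a i) (b i)) :
    prodCutSqrt s a b t = (-1) ^ {j ∈ s | a i < a j}.card * I *
      (√|∏ j ∈ s, (t - a j) * (t - b j)| : ℝ) := by
  classical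
  rw [prodCutSqrt, Finset.prod_congr rfl fun j hj => h.cutSqrt_eq_of_mem_Ioo hi hj ht,
    Finset.prod_mul_distrib, Finset.prod_mul_distrib, Finset.prod_ite_eq' s i, if_pos hi,
    Finset.prod_ite, Finset.prod_const, Finset.prod_const_one, mul_one, sqrt_abs_prod,
    Complex.ofReal_prod]

theorem aeval_div_prodCutSqrt_of_mem_Ioo (h : DisjointIntervals s a b) (T : Polynomial ℝ) {i : ι}
    (hi : i ∈ s) {t : ℝ} (ht : t ∈ Ioo (a i) (b i)) :
    Polynomial.aeval (t : ℂ) T / prodCutSqrt s a b t =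
      ((-1) ^ ({j ∈ s | a i < a j}.card + 1) *
        (T.eval t / √|∏ j ∈ s, (t - a j) * (t - b j)|) : ℝ) * I := by
  have hsign : ((-1 : ℂ) ^ {j ∈ s | a i < a j}.card)⁻¹ = (-1) ^ {j ∈ s | a i < a j}.card := by
    rw [← inv_pow, inv_neg_one]
  have heval : Polynomial.aeval (t : ℂ) T = T.eval t := (Polynomial.ofReal_eval T t).symm
  rw [h.prodCutSqrt_of_mem_Ioo hi ht, heval, div_eq_mul_inv, mul_inv, mul_inv, hsign,
    Complex.inv_I]
  push_cast
  ring

theorem cutDensity_of_mem_Ioo (h : DisjointIntervals s a b) (T : Polynomial ℝ) {i : ι}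
    (hi : i ∈ s) {t : ℝ} (ht : t ∈ Ioo (a i) (b i)) :
    cutDensity s a b T t = (-1) ^ ({j ∈ s | a i < a j}.card + 1) *
        (T.eval t / √|∏ j ∈ s, (t - a j) * (t - b j)|) := by
  rw [cutDensity, h.aeval_div_prodCutSqrt_of_mem_Ioo T hi ht, Complex.im_ofReal_mul,
    Complex.I_im, mul_one]

theorem cutDensity_eq_zero_of_notMem (h : DisjointIntervals s a b) (T : Polynomial ℝ) {t : ℝ}
    (ht : t ∉ ⋃ i ∈ s, Ioo (a i) (b i)) : cutDensity s a b T t = 0 := by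
  have hcut (i : ι) (hi : i ∈ s) : conj (cutSqrt (a i) (b i) t) = cutSqrt (a i) (b i) t :=
    Complex.conj_eq_iff_im.2 (cutSqrt_im_eq_zero (h.lt i hi).le fun hti => ht (mem_biUnion hi hti))
  rw [cutDensity, ← Complex.conj_eq_iff_im, map_div₀, prodCutSqrt, map_prod,
    Finset.prod_congr rfl hcut, ← Polynomial.aeval_conj, Complex.conj_ofReal]

theorem differentiableAt_cutDensity (h : DisjointIntervals s a b) (T : Polynomial ℝ) {x : ℝ}
    (hx : x ∈ ⋃ i ∈ s, Ioo (a i) (b i)) : DifferentiableAt ℝ (cutDensity s a b T) x := by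
  obtain ⟨i, hi, hxi⟩ := mem_iUnion₂.1 hx
  have hR : ∏ j ∈ s, (x - a j) * (x - b j) ≠ 0 := by
    have hne := h.notMem_endpoints hi hxi
    exact Finset.prod_ne_zero_iff.2 fun j hj => mul_ne_zero
      (sub_ne_zero.2 fun hxa => hne (mem_endpoints.2 ⟨j, hj, Or.inl hxa⟩))
      (sub_ne_zero.2 fun hxb => hne (mem_endpoints.2 ⟨j, hj, Or.inr hxb⟩))
  have hdiff : DifferentiableAt ℝ (fun t : ℝ => ∏ j ∈ s, (t - a j) * (t - b j)) x :=
    DifferentiableAt.fun_finsetProd fun j _ => by fun_prop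
  have hformula : DifferentiableAt ℝ (fun t : ℝ => (-1) ^ ({j ∈ s | a i < a j}.card + 1) *
      (T.eval t / √|∏ j ∈ s, (t - a j) * (t - b j)|)) x :=
    (T.differentiableAt.div ((hdiff.abs hR).sqrt (abs_ne_zero.2 hR))
      (sqrt_ne_zero'.2 (abs_pos.2 hR))).const_mul _
  refine hformula.congr_of_eventuallyEq ?_
  filter_upwards [Ioo_mem_nhds hxi.1 hxi.2] with t ht using h.cutDensity_of_mem_Ioo T hi ht

theorem cutDensity_eq_zero_of_notMem_Icc (h : DisjointIntervals s a b) (T : Polynomial ℝ) {t : ℝ}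
    (ht : t ∉ ⋃ i ∈ s, Icc (a i) (b i)) : cutDensity s a b T t = 0 :=
  h.cutDensity_eq_zero_of_notMem T
    (notMem_subset (biUnion_mono subset_rfl fun _ _ => Ioo_subset_Icc_self) ht)

theorem integrable_cutDensity (h : DisjointIntervals s a b) {T : Polynomial ℝ}
    (hT : T.natDegree < s.card) : Integrable (cutDensity s a b T) := by
  have hcauchy : Integrable fun t : ℝ => (cutDensity s a b T t : ℂ) / (t - I) :=
    (h.hasHalfPlaneBoundary_aeval_div hT).integrable_im_div_sub (by simp)
  have hS := isCompact_biUnion_Icc s a b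
  have hon : IntegrableOn (fun t => (cutDensity s a b T t : ℂ)) (⋃ i ∈ s, Icc (a i) (b i)) := by
    refine (hcauchy.integrableOn.mul_continuousOn (g' := fun t : ℝ => (t : ℂ) - I)
      (by fun_prop) hS).congr_fun (fun t _ => ?_) hS.measurableSet
    exact div_mul_cancel₀ _ (ofReal_sub_ne_zero (by simp) t)
  have hint : Integrable fun t => (cutDensity s a b T t : ℂ) :=
    (integrableOn_iff_integrable_of_support_subset fun t ht => by
      by_contra htS
      exact ht (by simp [h.cutDensity_eq_zero_of_notMem_Icc T htS])).1 hon
  simpa using hint.re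

theorem integral_cutDensity_smul (h : DisjointIntervals s a b) {T : Polynomial ℝ} {E : Type*}
    [NormedAddCommGroup E] [NormedSpace ℝ E] {μ : Measure ℝ} {φ : ℝ → E}
    (hφ : Integrable (fun t => cutDensity s a b T t • φ t) μ) :
    ∫ t, cutDensity s a b T t • φ t ∂μ = ∑ i ∈ s, (-1 : ℝ) ^ ({j ∈ s | a i < a j}.card + 1) •
      ∫ t in Ioo (a i) (b i), (T.eval t / √|∏ j ∈ s, (t - a j) * (t - b j)|) • φ t ∂μ := by
  rw [integral_eq_sum_setIntegral h.pairwiseDisjoint_Ioo (fun _ _ => measurableSet_Ioo) hφ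
    fun t ht => by rw [h.cutDensity_eq_zero_of_notMem T ht, zero_smul]]
  refine Finset.sum_congr rfl fun i hi => ?_
  rw [← integral_smul]
  refine setIntegral_congr_fun measurableSet_Ioo fun t ht => ?_
  simp only [h.cutDensity_of_mem_Ioo T hi ht, mul_smul]

theorem integral_cutDensity_div_sub (h : DisjointIntervals s a b) {T : Polynomial ℝ}
    (hT : T.natDegree < s.card) {z : ℂ} (hz : z ∉ Complex.ofReal '' ⋃ i ∈ s, Icc (a i) (b i)) :
    ∫ t : ℝ, (cutDensity s a b T t : ℂ) / (t - z) =
      π * (Polynomial.aeval z T / prodCutSqrt s a b z) := by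
  have hS := isCompact_biUnion_Icc s a b
  refine eqOn_compl_image_ofReal hS.isClosed hS.ne_univ
    (f := fun z => ∫ t : ℝ, (cutDensity s a b T t : ℂ) / (t - z))
    (g := fun z => π * (Polynomial.aeval z T / prodCutSqrt s a b z)) (fun w hw => ?_)
    (fun w hw => ?_)
    (fun w hw => (h.hasHalfPlaneBoundary_aeval_div hT).integral_im_div_sub hw) hz
  · exact (differentiableAt_integral_div_sub hS.isClosed (h.integrable_cutDensity hT).ofReal
      (fun t ht => by simp [h.cutDensity_eq_zero_of_notMem_Icc T ht]) hw).differentiableWithinAt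
  · exact ((h.differentiableAt_aeval_div_prodCutSqrt T hw).const_mul _).differentiableWithinAt

theorem tendsto_setIntegral_cutDensity (h : DisjointIntervals s a b) {T : Polynomial ℝ}
    (hT : T.natDegree < s.card) {x : ℝ} (hx : x ∈ ⋃ i ∈ s, Ioo (a i) (b i)) :
    Tendsto (fun ε => ∫ t in {t | ε ≤ |t - x|}, cutDensity s a b T t * (t - x)⁻¹) (𝓝[>] 0)
      (𝓝 0) := by
  obtain ⟨i, hi, hxi⟩ := mem_iUnion₂.1 hx
  refine tendsto_setIntegral_of_tendsto_re_integral (h.integrable_cutDensity hT)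
    (h.differentiableAt_cutDensity T hx).isBigO_sub ?_
  have hboundary := h.tendsto_aeval_div_prodCutSqrt_nhdsGT T (h.notMem_endpoints hi hxi)
  have hre : (π * (Polynomial.aeval (x : ℂ) T / prodCutSqrt s a b x)).re = 0 := by
    rw [h.aeval_div_prodCutSqrt_of_mem_Ioo T hi hxi, Complex.re_ofReal_mul, Complex.re_ofReal_mul,
      Complex.I_re, mul_zero, mul_zero]
  have hlim := (Complex.continuous_re.tendsto _).comp (hboundary.const_mul (π : ℂ))
  rw [hre] at hlim
  refine hlim.congr' ?_
  filter_upwards [self_mem_nhdsWithin] with ε hε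
  exact congrArg Complex.re ((h.hasHalfPlaneBoundary_aeval_div hT).integral_im_div_sub
    (z := x + ε * I) (by simpa using hε)).symm

theorem sum_setIntegral_div_sub (h : DisjointIntervals s a b) {T : Polynomial ℝ}
    (hT : T.natDegree < s.card) {z : ℂ} (hz : z ∉ Complex.ofReal '' ⋃ i ∈ s, Icc (a i) (b i)) :
    ∑ i ∈ s, (-1 : ℝ) ^ ({j ∈ s | a i < a j}.card + 1) • ∫ t in Ioo (a i) (b i),
      ((T.eval t / √|∏ j ∈ s, (t - a j) * (t - b j)| : ℝ) : ℂ) / (t - z) =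
      π * (Polynomial.aeval z T / prodCutSqrt s a b z) := by
  have hint := integrable_div_sub_of_notMem (isCompact_biUnion_Icc s a b).isClosed
    (h.integrable_cutDensity hT).ofReal
    (fun t ht => by simp [h.cutDensity_eq_zero_of_notMem_Icc T ht]) hz
  rw [← h.integral_cutDensity_div_sub hT hz]
  simp only [div_eq_mul_inv _ (_ - z), ← Complex.real_smul] at hint ⊢
  exact (h.integral_cutDensity_smul hint).symm

theorem tendsto_sum_setIntegral_div (h : DisjointIntervals s a b) {T : Polynomial ℝ}
    (hT : T.natDegree < s.card) {x : ℝ} (hx : x ∈ ⋃ i ∈ s, Ioo (a i) (b i)) :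
    Tendsto (fun ε => ∑ i ∈ s, (-1 : ℝ) ^ ({j ∈ s | a i < a j}.card + 1) *
      ∫ t in {t | t ∈ Ioo (a i) (b i) ∧ ε ≤ |t - x|},
        T.eval t / ((t - x) * √|∏ j ∈ s, (t - a j) * (t - b j)|)) (𝓝[>] 0) (𝓝 0) := by
  refine (h.tendsto_setIntegral_cutDensity hT hx).congr' ?_
  filter_upwards [self_mem_nhdsWithin] with ε hε
  refine (h.integral_cutDensity_smul
    (integrableOn_mul_inv_sub (h.integrable_cutDensity hT) x hε)).trans ?_
  simp only [Measure.restrict_restrict measurableSet_Ioo, smul_eq_mul, div_mul_eq_div_div_swap]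
  rfl

theorem eqOn_prodCutSqrt (h : DisjointIntervals s a b) {f : ℂ → ℂ}
    (hf : ContinuousOn f (Complex.ofReal '' ⋃ i ∈ s, Icc (a i) (b i))ᶜ)
    (hsq : ∀ z ∉ Complex.ofReal '' ⋃ i ∈ s, Icc (a i) (b i),
      f z ^ 2 = ∏ i ∈ s, (z - a i) * (z - b i))
    (hlim : Tendsto (fun z => f z / z ^ s.card) (cobounded ℂ) (𝓝 1)) :
    EqOn f (prodCutSqrt s a b) (Complex.ofReal '' ⋃ i ∈ s, Icc (a i) (b i))ᶜ := by
  have hS := isCompact_biUnion_Icc s a b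
  exact eqOn_of_sq_eq_of_tendsto_div_pow (isPreconnected_compl_image_ofReal hS.ne_univ)
    (isBounded_def.1 (hS.image Complex.continuous_ofReal).isBounded) hf
    (fun z hz => (h.differentiableAt_prodCutSqrt hz).continuousAt.continuousWithinAt)
    (fun z hz => (hsq z hz).trans (prodCutSqrt_sq z).symm)
    (fun z hz => h.prodCutSqrt_ne_zero_of_notMem hz) hlim tendsto_prodCutSqrt_div_pow

end DisjointIntervals

end CutDensity

section ConsecutiveIntervals

variable {L : ℕ} {a b : ℕ → ℝ}

theorem right_lt_left_of_lt (hlt : ∀ l ∈ Finset.Icc 1 L, a l < b l)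
    (hsucc : ∀ l ∈ Finset.Icc 1 (L - 1), b l < a (l + 1)) {l m : ℕ} (hl : 1 ≤ l) (hlm : l < m)
    (hm : m ≤ L) : b l < a m := by
  induction m, hlm using Nat.le_induction with
  | base => exact hsucc l (Finset.mem_Icc.2 ⟨hl, by omega⟩)
  | succ k hlk ih =>
    have : l < k := hlk
    exact ((ih (by omega)).trans (hlt k (Finset.mem_Icc.2 ⟨by omega, by omega⟩))).trans
      (hsucc k (Finset.mem_Icc.2 ⟨by omega, by omega⟩))

theorem disjointIntervals_Icc (hlt : ∀ l ∈ Finset.Icc 1 L, a l < b l)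
    (hsucc : ∀ l ∈ Finset.Icc 1 (L - 1), b l < a (l + 1)) :
    DisjointIntervals (Finset.Icc 1 L) a b := by
  refine ⟨hlt, fun l hl m hm hlm => ?_⟩
  have hl := Finset.mem_Icc.1 hl
  have hm := Finset.mem_Icc.1 hm
  rw [Function.onFun, disjoint_left]
  rintro t htl htm
  rcases hlm.lt_or_gt with hlm | hml
  · exact (right_lt_left_of_lt hlt hsucc hl.1 hlm hm.2).not_ge (htm.1.trans htl.2)
  · exact (right_lt_left_of_lt hlt hsucc hm.1 hml hl.2).not_ge (htl.1.trans htm.2)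

theorem card_filter_lt (hlt : ∀ l ∈ Finset.Icc 1 L, a l < b l)
    (hsucc : ∀ l ∈ Finset.Icc 1 (L - 1), b l < a (l + 1)) {m : ℕ} (hm : m ∈ Finset.Icc 1 L) :
    {j ∈ Finset.Icc 1 L | a m < a j}.card = L - m := by
  have hmono : StrictMonoOn a (Finset.Icc 1 L) := fun l hl j hj hlj =>
    (hlt l hl).trans (right_lt_left_of_lt hlt hsucc (Finset.mem_Icc.1 hl).1 hlj
      (Finset.mem_Icc.1 hj).2)
  rw [← Nat.card_Ioc]
  congr 1
  ext j
  rw [Finset.mem_filter, Finset.mem_Ioc]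
  have hm' := Finset.mem_Icc.1 hm
  constructor
  · rintro ⟨hj, haj⟩
    exact ⟨(hmono.lt_iff_lt hm hj).1 haj, (Finset.mem_Icc.1 hj).2⟩
  · rintro ⟨hmj, hjL⟩
    have hj : j ∈ Finset.Icc 1 L := Finset.mem_Icc.2 ⟨hm'.1.trans hmj.le, hjL⟩
    exact ⟨hj, hmono hm hj hmj⟩

theorem neg_one_pow_card_filter_lt (hlt : ∀ l ∈ Finset.Icc 1 L, a l < b l)
    (hsucc : ∀ l ∈ Finset.Icc 1 (L - 1), b l < a (l + 1)) {m : ℕ} (hm : m ∈ Finset.Icc 1 L) :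
    (-1 : ℝ) ^ ({j ∈ Finset.Icc 1 L | a m < a j}.card + 1) = (-1) ^ (L + m + 1) := by
  obtain ⟨k, rfl⟩ := Nat.exists_eq_add_of_le (Finset.mem_Icc.1 hm).2
  rw [card_filter_lt hlt hsucc hm, Nat.add_sub_cancel_left,
    show m + k + m + 1 = 2 * m + (k + 1) by ring, pow_add _ (2 * m), pow_mul, neg_one_sq, one_pow,
    one_mul]

end ConsecutiveIntervals

end

theorem stmt11 (L : ℕ) (hL : 1 ≤ L) (aa bb : ℕ → ℝ)
    (h2 : ∀ l ∈ Finset.Icc 1 L, aa l < bb l)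
    (h3 : ∀ l ∈ Finset.Icc 1 (L - 1), bb l < aa (l + 1))
    (S : Set ℝ) (hS : S = ⋃ l ∈ Finset.Icc 1 L, Set.Icc (aa l) (bb l))
    (R : ℝ → ℝ) (hR : ∀ x, R x = ∏ l ∈ Finset.Icc 1 L, ((x - aa l) * (x - bb l)))
    (sqrtR : ℂ → ℂ)
    (hsq : ∀ z : ℂ, z ∉ Complex.ofReal '' S →
      sqrtR z ^ 2 = ∏ l ∈ Finset.Icc 1 L, ((z - (aa l : ℂ)) * (z - (bb l : ℂ))))
    (hanal : AnalyticOn ℂ sqrtR (Complex.ofReal '' S)ᶜ)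
    (hlim : Tendsto (fun z : ℂ => sqrtR z / z ^ L)
      (Filter.comap (norm : ℂ → ℝ) Filter.atTop) (nhds 1))
    (T : Polynomial ℝ) (hT : T.degree ≤ (L - 1 : ℕ)) :
    -- (i)
    (∀ z : ℂ, z ∉ Complex.ofReal '' S →
      (1 / (π : ℂ)) * ∑ m ∈ Finset.Icc 1 L, (-1 : ℂ) ^ (L + m + 1) *
          ∫ t in (aa m)..(bb m), ((T.eval t / Real.sqrt |R t| : ℝ) : ℂ) / ((t : ℂ) - z) =
        Polynomial.aeval z T / sqrtR z) ∧
    -- (ii)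
    (∀ x : ℝ, x ∈ interior S →
      Tendsto (fun ε : ℝ => ∑ m ∈ Finset.Icc 1 L, (-1 : ℝ) ^ (L + m + 1) *
          ∫ t in {t : ℝ | t ∈ Set.Ioo (aa m) (bb m) ∧ ε ≤ |t - x|},
            T.eval t / ((t - x) * Real.sqrt |R t|))
        (nhdsWithin 0 (Set.Ioi 0)) (nhds 0)) := by
  subst hS
  obtain rfl : R = fun x => ∏ l ∈ Finset.Icc 1 L, (x - aa l) * (x - bb l) := funext hR
  have h := disjointIntervals_Icc h2 h3
  have hdeg : T.natDegree < (Finset.Icc 1 L).card := by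
    have := Polynomial.natDegree_le_of_degree_le hT
    rw [Nat.card_Icc]
    omega
  have hsign := fun m => neg_one_pow_card_filter_lt h2 h3 (m := m)
  refine ⟨fun z hz => ?_, fun x hx => ?_⟩
  · rw [h.eqOn_prodCutSqrt hanal.continuousOn hsq (by simpa [← comap_norm_atTop] using hlim) hz,
      one_div_mul_eq_div, div_eq_iff (Complex.ofReal_ne_zero.2 pi_ne_zero), mul_comm,
      ← h.sum_setIntegral_div_sub hdeg hz]
    refine Finset.sum_congr rfl fun m hm => ?_
    rw [hsign m hm, Complex.real_smul, intervalIntegral.integral_of_le (h2 m hm).le,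
      integral_Ioc_eq_integral_Ioo]
    push_cast
    rfl
  · refine (h.tendsto_sum_setIntegral_div hdeg (h.interior_biUnion_Icc_subset hx)).congr fun ε => ?_
    exact Finset.sum_congr rfl fun m hm => by rw [hsign m hm]
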